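/- arXiv:math/0111196 — 9 statements merged into one kernel-verified Lean document; each statement's English description precedes it below -/
import Mathlib

section
/- If S is an n-cut and π is an ordered set partition of [n] with m parts, then πS is an m-cut; that is, πS is span-closed in ℝ^m, and every element of πS other than the origin has nonempty Plus set and nonempty Minus set. -/
/-- A vector in ℝ^n with all coordinates in {-1,0,1}. -/
def IsCube {n : ℕ} (x : Fin n → ℝ) : Prop := ∀ i, x i = -1 ∨ x i = 0 ∨ x i = 1

def PlusSet {n : ℕ} (x : Fin n → ℝ) : Set (Fin n) := {i | x i = 1}

def MinusSet {n : ℕ} (x : Fin n → ℝ) : Set (Fin n) := {i | x i = -1}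

/-- An `n`-cut: a span-closed subset of {-1,0,1}^n all of whose nonzero elements
have nonempty Plus and Minus sets. -/
def IsCut {n : ℕ} (S : Set (Fin n → ℝ)) : Prop :=
  (∀ x ∈ S, IsCube x) ∧
  ((Submodule.span ℝ S : Set (Fin n → ℝ)) ∩ {x | IsCube x}) = S ∧
  ∀ x ∈ S, x ≠ 0 → (PlusSet x).Nonempty ∧ (MinusSet x).Nonempty

/-- An ordered set partition of [n] with m parts. -/
def IsOrderedPartition {n m : ℕ} (π : Fin m → Set (Fin n)) : Prop :=
  (∀ j, (π j).Nonempty) ∧ (∀ j k, j ≠ k → Disjoint (π j) (π k)) ∧ (⋃ j, π j) = Set.univ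

/-- The action of an ordered set partition on a subset of {-1,0,1}^n. -/
def cutAct {n m : ℕ} (π : Fin m → Set (Fin n)) (S : Set (Fin n → ℝ)) : Set (Fin m → ℝ) :=
  {t | IsCube t ∧ ∃ s ∈ S, ∀ j : Fin m, ∀ i ∈ π j, s i = t j}

/-- The blocks of an ordered partition are the fibres of a surjection. -/
theorem IsOrderedPartition.exists_surjective {n m : ℕ} {π : Fin m → Set (Fin n)}
    (hπ : IsOrderedPartition π) :
    ∃ f : Fin n → Fin m, Function.Surjective f ∧ ∀ i j, i ∈ π j ↔ f i = j := by
  obtain ⟨hne, hdisj, hcover⟩ := hπ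
  have hex : ∀ i, ∃ j, i ∈ π j := fun i =>
    Set.mem_iUnion.mp (hcover.ge (Set.mem_univ i))
  choose f hf using hex
  have hiff : ∀ i j, i ∈ π j ↔ f i = j := fun i j => by
    refine ⟨fun hi => ?_, fun h => h ▸ hf i⟩
    by_contra h
    exact Set.disjoint_left.mp (hdisj _ _ h) (hf i) hi
  exact ⟨f, fun j => (hne j).imp fun i hi => (hiff i j).mp hi, hiff⟩

theorem mem_cutAct_iff {n m : ℕ} {π : Fin m → Set (Fin n)} {f : Fin n → Fin m}
    (hf : ∀ i j, i ∈ π j ↔ f i = j) (S : Set (Fin n → ℝ)) (t : Fin m → ℝ) :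
    t ∈ cutAct π S ↔ IsCube t ∧ t ∘ f ∈ S := by
  refine and_congr_right fun _ => ⟨?_, fun h => ⟨_, h, fun j i hi => ?_⟩⟩
  · rintro ⟨s, hs, hst⟩
    have : t ∘ f = s := funext fun i => (hst (f i) i ((hf i _).mpr rfl)).symm
    rwa [this]
  · exact congrArg t ((hf i j).mp hi)

/-- if `S` is an `n`-cut and `π` an ordered set partition of `[n]` with `m`
parts, then `πS` is an `m`-cut. -/
theorem cutAct_isCut {n m : ℕ} (S : Set (Fin n → ℝ)) (hS : IsCut S)
    (π : Fin m → Set (Fin n)) (hπ : IsOrderedPartition π) :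
    IsCut (cutAct π S) := by
  obtain ⟨f, hsurj, hf⟩ := hπ.exists_surjective
  obtain ⟨-, hspan, hsign⟩ := hS
  refine ⟨fun t ht => ht.1, Set.Subset.antisymm ?_ fun t ht => ⟨Submodule.subset_span ht, ht.1⟩, ?_⟩
  · rintro t ⟨ht, hcube⟩
    have hle : Submodule.span ℝ (cutAct π S) ≤
        (Submodule.span ℝ S).comap (LinearMap.funLeft ℝ ℝ f) :=
      Submodule.span_le.mpr fun u hu =>
        Submodule.subset_span ((mem_cutAct_iff hf S u).mp hu).2
    refine (mem_cutAct_iff hf S t).mpr ⟨hcube, ?_⟩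
    rw [← hspan]
    exact ⟨hle ht, fun i => hcube (f i)⟩
  · intro t ht hne
    have hne' : t ∘ f ≠ 0 := fun h => hne (hsurj.injective_comp_right h)
    obtain ⟨⟨i, hi⟩, ⟨k, hk⟩⟩ := hsign _ ((mem_cutAct_iff hf S t).mp ht).2 hne'
    exact ⟨⟨f i, hi⟩, ⟨f k, hk⟩⟩
end

section
/- Let a ≥ 2, k ≥ 1 and l ≥ a be integers. Let S = {x ∈ {-1,0,1}^{l+k} : Σ_{i=1}^{l} x_i + a·Σ_{j=l+1}^{l+k} x_j = 0} (the cut associated to the partition (a^k,1^l)), let π ∈ P(l+k) be the partition whose only non-singleton block is {1,…,a}, let T = {z ∈ {-1,0,1}^{l} : Σ_{i=1}^{l} z_i = 0}, and let ν ∈ P(l) be the partition whose only non-singleton block is {1,…,a}. Then: (i) π↓S = {ρ ∈ P(l+k) : ρ|_{{1,…,l}} ∈ ν↓T}; (ii) S ∖ (π↓S) = {x ∈ {-1,0,1}^{l+k} : Σ_{i=1}^{l} x_i = 0, Σ_{j=l+1}^{l+k} x_j = 0, and |Plus(x_1,…,x_l)| < a}; and (iii) T ∖ (ν↓T) = {z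 ∈ T : |Plus(z)| < a}, so that S ∖ (π↓S) = {x : (x_1,…,x_l) ∈ T∖(ν↓T) and Σ_{j=l+1}^{l+k} x_j = 0}. -/
/-- The multiset of coordinates where `x` equals 1 (each appearing once). -/
noncomputable def plusM {n : ℕ} (x : Fin n → ℝ) : Multiset (Fin n) :=
  (Finset.univ.filter (fun i => x i = 1)).val

/-- The multiset of coordinates where `x` equals -1 (each appearing once). -/
noncomputable def minusM {n : ℕ} (x : Fin n → ℝ) : Multiset (Fin n) :=
  (Finset.univ.filter (fun i => x i = -1)).val

/-- One step of the closure operation `⇓S` on collections of multisubsets of `[n]`: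
(2) merge two blocks; (3) replace, inside one block, one copy of each element of
`Plus(x)` by one copy of each element of `Minus(x)`, for some `x ∈ S`. -/
inductive DownStep {n : ℕ} (S : Set (Fin n → ℝ)) :
    Multiset (Multiset (Fin n)) → Multiset (Multiset (Fin n)) → Prop
  | merge (B₁ B₂ : Multiset (Fin n)) (rest : Multiset (Multiset (Fin n))) :
      DownStep S (B₁ ::ₘ B₂ ::ₘ rest) ((B₁ + B₂) ::ₘ rest)
  | swap (B₁ : Multiset (Fin n)) (rest : Multiset (Multiset (Fin n))) (x : Fin n → ℝ)
      (hx : x ∈ S) (hsub : plusM x ≤ B₁) :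
      DownStep S (B₁ ::ₘ rest) ((B₁ - plusM x + minusM x) ::ₘ rest)

/-- A multiset of multisets of `[n]` which is an honest partition of `[n]`:
all blocks nonempty, globally no repetitions, and every element covered. -/
def IsPartitionM {n : ℕ} (A : Multiset (Multiset (Fin n))) : Prop :=
  (∀ B ∈ A, B ≠ 0) ∧ A.sum.Nodup ∧ ∀ i : Fin n, i ∈ A.sum

/-- `π ↓ S`: the set of honest partitions of `[n]` reachable from `π` by `⇓S`-steps. -/
def downClos {n : ℕ} (S : Set (Fin n → ℝ)) (π : Multiset (Multiset (Fin n))) :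
    Set (Multiset (Multiset (Fin n))) :=
  {ρ | IsPartitionM ρ ∧ Relation.ReflTransGen (DownStep S) π ρ}

/-- The partition of `[n]` whose only non-singleton blocks are `Plus(s)` and `Minus(s)`. -/
noncomputable def partOf {n : ℕ} (s : Fin n → ℝ) : Multiset (Multiset (Fin n)) :=
  plusM s ::ₘ minusM s ::ₘ
    ((Finset.univ.filter (fun i => s i = 0)).val.map (fun i => ({i} : Multiset (Fin n))))

/-- `S ∖ Π`: remove from `S` every element `s` whose associated partition
(non-singleton blocks `Plus(s)`, `Minus(s)`) lies in `Π`. -/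
noncomputable def cutMinus {n : ℕ} (S : Set (Fin n → ℝ))
    (P : Set (Multiset (Multiset (Fin n)))) : Set (Fin n → ℝ) :=
  {s | s ∈ S ∧ partOf s ∉ P}

/-- The partition of `[n]` whose only (potentially) non-singleton block is `A`. -/
def onlyBlock {n : ℕ} (A : Finset (Fin n)) : Multiset (Multiset (Fin n)) :=
  A.val ::ₘ ((Finset.univ \ A).val.map (fun i => ({i} : Multiset (Fin n))))

/-- Restriction of a partition of `[n]` to the first `l` coordinates `{0,…,l-1}`. -/
def restrictFirst {n : ℕ} (l : ℕ) (ρ : Multiset (Multiset (Fin n))) :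
    Multiset (Multiset (Fin l)) :=
  (ρ.map (fun B => B.filterMap
    (fun i => if h : (i : ℕ) < l then some (⟨(i : ℕ), h⟩ : Fin l) else none))).filter
    (fun B => B ≠ 0)

/-- The cut associated to the partition `(a^k, 1^l)`: first `l` coordinates have
weight 1, last `k` coordinates have weight `a`. -/
noncomputable def SAK (a k l : ℕ) : Set (Fin (l + k) → ℝ) :=
  {x | IsCube x ∧ ∑ i : Fin (l + k), (if (i : ℕ) < l then 1 else (a : ℝ)) * x i = 0}

/-- The cut associated to the partition `(1^l)`. -/
noncomputable def TOnes (l : ℕ) : Set (Fin l → ℝ) :=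
  {z | IsCube z ∧ ∑ i, z i = 0}

/-- The partition of `[n]` whose only non-singleton block is `{0,…,a-1}`. -/
def firstBlock (a n : ℕ) : Multiset (Multiset (Fin n)) :=
  onlyBlock (Finset.univ.filter (fun i : Fin n => (i : ℕ) < a))

/-- The cut in `{-1,0,1}^n` with weight `1` on the coordinates below `l` and weight `a` on the
others. -/
def weightCut (a n l : ℕ) : Set (Fin n → ℝ) :=
  {x | IsCube x ∧ ∑ i : Fin n, (if (i : ℕ) < l then 1 else (a : ℝ)) * x i = 0}

theorem DownStep.add_right {n : ℕ} {S : Set (Fin n → ℝ)} {A A' : Multiset (Multiset (Fin n))}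
    (h : DownStep S A A') (R : Multiset (Multiset (Fin n))) : DownStep S (A + R) (A' + R) := by
  cases h with
  | merge B₁ B₂ rest => simpa using DownStep.merge B₁ B₂ (rest + R)
  | swap B₁ rest x hx hsub => simpa using DownStep.swap B₁ (rest + R) x hx hsub

/-- The family `A ⇓ S`, as a relation. -/
abbrev Reaches {n : ℕ} (S : Set (Fin n → ℝ)) :
    Multiset (Multiset (Fin n)) → Multiset (Multiset (Fin n)) → Prop :=
  Relation.ReflTransGen (DownStep S)

namespace Reaches

variable {n : ℕ} {S : Set (Fin n → ℝ)}

theorem add_right {A A' : Multiset (Multiset (Fin n))} (h : Reaches S A A')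
    (R : Multiset (Multiset (Fin n))) : Reaches S (A + R) (A' + R) :=
  Relation.ReflTransGen.lift (p := DownStep S) (· + R) (fun _ _ h => DownStep.add_right h R) _ _ h

theorem add {A A' R R' : Multiset (Multiset (Fin n))} (h : Reaches S A A')
    (h' : Reaches S R R') : Reaches S (A + R) (A' + R') := by
  refine (h.add_right R).trans ?_
  rw [add_comm A', add_comm A']
  exact h'.add_right A'

theorem cons_map_singleton (A C : Multiset (Fin n)) :
    Reaches S (A ::ₘ C.map (fun i => ({i} : Multiset (Fin n)))) {A + C} := by
  induction C using Multiset.induction_on generalizing A with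
  | empty => simpa using Relation.ReflTransGen.refl
  | cons i C ih =>
    rw [Multiset.map_cons]
    refine Relation.ReflTransGen.head (DownStep.merge _ _ _) ?_
    have h := ih (A + {i})
    rwa [add_assoc, Multiset.singleton_add] at h

theorem map_singleton_sum (ρ : Multiset (Multiset (Fin n))) (hρ : ∀ B ∈ ρ, B ≠ 0) :
    Reaches S (ρ.sum.map (fun i => ({i} : Multiset (Fin n)))) ρ := by
  induction ρ using Multiset.induction_on with
  | empty => simpa using Relation.ReflTransGen.refl
  | cons B ρ ih =>
    obtain ⟨i, hi⟩ := Multiset.exists_mem_of_ne_zero (hρ B (Multiset.mem_cons_self B ρ))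
    obtain ⟨C, rfl⟩ := Multiset.exists_cons_of_mem hi
    have h := cons_map_singleton (S := S) {i} C
    rw [Multiset.singleton_add] at h
    rw [Multiset.sum_cons, Multiset.map_add, Multiset.map_cons, ← Multiset.singleton_add _ ρ]
    exact h.add (ih fun B hB => hρ B (Multiset.mem_cons_of_mem hB))

end Reaches

theorem IsPartitionM.sum_eq {n : ℕ} {ρ : Multiset (Multiset (Fin n))} (h : IsPartitionM ρ) :
    ρ.sum = (Finset.univ : Finset (Fin n)).val :=
  (Multiset.Nodup.ext h.2.1 Finset.univ.nodup).2 fun i => by simp [h.2.2 i]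

theorem Reaches.of_le_block {n : ℕ} {S : Set (Fin n → ℝ)} {ρ : Multiset (Multiset (Fin n))}
    (hρ : IsPartitionM ρ) {A : Finset (Fin n)} {B : Multiset (Fin n)} (hB : B ∈ ρ)
    (hAB : A.val ≤ B) : Reaches S (onlyBlock A) ρ := by
  obtain ⟨ρ, rfl⟩ := Multiset.exists_cons_of_mem hB
  obtain ⟨C, rfl⟩ := Multiset.le_iff_exists_add.1 hAB
  have hs := hρ.sum_eq
  have hval : (Finset.univ \ A).val = C + ρ.sum := by
    rw [Finset.sdiff_val, ← hs, Multiset.sum_cons, add_assoc, add_tsub_cancel_left]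
  rw [onlyBlock, hval, Multiset.map_add, ← Multiset.cons_add, ← Multiset.singleton_add _ ρ]
  exact (Reaches.cons_map_singleton _ _).add
    (Reaches.map_singleton_sum ρ fun B hB => hρ.1 B (Multiset.mem_cons_of_mem hB))

theorem Reaches.replace_one {a n l : ℕ} {i j : Fin n} (hi : (i : ℕ) < l) (hj : (j : ℕ) < l)
    (C : Multiset (Fin n)) :
    Reaches (weightCut a n l) {i ::ₘ C} {j ::ₘ C} := by
  rcases eq_or_ne i j with rfl | hij
  · exact Relation.ReflTransGen.refl
  let x : Fin n → ℝ := fun m => if m = i then 1 else if m = j then -1 else 0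
  have hx : x ∈ weightCut a n l := by
    refine ⟨fun m => ?_, ?_⟩
    · simp only [x]; split_ifs <;> simp
    · have hterm : ∀ m : Fin n, (if (m : ℕ) < l then 1 else (a : ℝ)) * x m =
          (if m = i then 1 else 0) - (if m = j then 1 else 0) := by
        intro m
        rcases eq_or_ne m i with rfl | hmi
        · simp [x, hi, hij]
        · rcases eq_or_ne m j with rfl | hmj
          · simp [x, hj, hmi]
          · simp [x, hmi, hmj]
      simp [hterm]
  have hp : plusM x = {i} := by
    have : (Finset.univ.filter fun m => x m = 1) = {i} := by
      ext m
      simp only [x, Finset.mem_filter, Finset.mem_univ, true_and, Finset.mem_singleton]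
      split_ifs <;> norm_num <;> assumption
    rw [plusM, this, Finset.singleton_val]
  have hm : minusM x = {j} := by
    have : (Finset.univ.filter fun m => x m = -1) = {j} := by
      ext m
      simp only [x, Finset.mem_filter, Finset.mem_univ, true_and, Finset.mem_singleton]
      split_ifs with h1 h2
      · subst h1; norm_num; exact hij
      · simpa using h2
      · norm_num; exact h2
    rw [minusM, this, Finset.singleton_val]
  have h := DownStep.swap (S := weightCut a n l) (i ::ₘ C) 0 x hx (by simp [hp])
  rw [hp, hm, Multiset.sub_singleton, Multiset.erase_cons_head, add_comm,
    Multiset.singleton_add] at h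
  exact Relation.ReflTransGen.single h

theorem Reaches.replace {a n l : ℕ} {C D : Multiset (Fin n)} (hC : ∀ i ∈ C, (i : ℕ) < l)
    (hD : ∀ i ∈ D, (i : ℕ) < l) (hcard : C.card = D.card) (E : Multiset (Fin n)) :
    Reaches (weightCut a n l) {C + E} {D + E} := by
  induction C using Multiset.induction_on generalizing D E with
  | empty =>
    obtain rfl : D = 0 := Multiset.card_eq_zero.1 (by simpa using hcard.symm)
    exact Relation.ReflTransGen.refl
  | cons i C ih =>
    obtain ⟨j, hj⟩ : ∃ j, j ∈ D := Multiset.card_pos_iff_exists_mem.1 (by simp [← hcard])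
    obtain ⟨D, rfl⟩ := Multiset.exists_cons_of_mem hj
    rw [Multiset.cons_add]
    refine (Reaches.replace_one (hC i (by simp)) (hD j (by simp)) _).trans ?_
    have h := ih (D := D) (fun i hi => hC i (by simp [hi])) (fun i hi => hD i (by simp [hi]))
      (by simpa using hcard) (j ::ₘ E)
    rwa [Multiset.add_cons, Multiset.add_cons, ← Multiset.cons_add j D] at h

theorem Reaches.replace_singletons {a n l : ℕ} {C D : Multiset (Fin n)}
    (hC : ∀ i ∈ C, (i : ℕ) < l) (hD : ∀ i ∈ D, (i : ℕ) < l) (hcard : C.card = D.card) :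
    Reaches (weightCut a n l) (C.map (fun i => ({i} : Multiset (Fin n))))
      (D.map (fun i => ({i} : Multiset (Fin n)))) := by
  induction C using Multiset.induction_on generalizing D with
  | empty =>
    obtain rfl : D = 0 := Multiset.card_eq_zero.1 (by simpa using hcard.symm)
    exact Relation.ReflTransGen.refl
  | cons i C ih =>
    obtain ⟨j, hj⟩ : ∃ j, j ∈ D := Multiset.card_pos_iff_exists_mem.1 (by simp [← hcard])
    obtain ⟨D, rfl⟩ := Multiset.exists_cons_of_mem hj
    rw [Multiset.map_cons, Multiset.map_cons, ← Multiset.singleton_add ({i} : Multiset (Fin n)),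
      ← Multiset.singleton_add ({j} : Multiset (Fin n))]
    exact (Reaches.replace_one (hC i (by simp)) (hD j (by simp)) 0).add
      (ih (fun i hi => hC i (by simp [hi])) (fun i hi => hD i (by simp [hi]))
        (by simpa using hcard))

theorem Reaches.onlyBlock {a n l : ℕ} {A A' : Finset (Fin n)} (hA : ∀ i ∈ A, (i : ℕ) < l)
    (hA' : ∀ i ∈ A', (i : ℕ) < l) (hcard : A.card = A'.card) :
    Reaches (weightCut a n l) (onlyBlock A) (onlyBlock A') := by
  have hsplit : ∀ A : Finset (Fin n), (∀ i ∈ A, (i : ℕ) < l) → (Finset.univ \ A).val =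
      ((Finset.univ.filter fun i : Fin n => (i : ℕ) < l) \ A).val +
        (Finset.univ.filter fun i : Fin n => ¬ (i : ℕ) < l).val := by
    intro A hA
    rw [← Finset.disjUnion_val _ _ (Finset.disjoint_left.2 fun i => by simp_all)]
    congr 1
    ext i
    have := hA i
    simp only [Finset.mem_sdiff, Finset.mem_univ, true_and, Finset.mem_disjUnion,
      Finset.mem_filter]
    tauto
  rw [_root_.onlyBlock, _root_.onlyBlock, hsplit A hA, hsplit A' hA', Multiset.map_add,
    Multiset.map_add, ← Multiset.singleton_add, ← Multiset.singleton_add A'.val]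
  have h := Reaches.replace (a := a) (C := A.val) (D := A'.val) hA hA' hcard 0
  rw [add_zero, add_zero] at h
  have hlt : ∀ A : Finset (Fin n),
      ∀ i ∈ ((Finset.univ.filter fun i : Fin n => (i : ℕ) < l) \ A).val, (i : ℕ) < l :=
    fun A i hi => (Finset.mem_filter.1 (Finset.mem_sdiff.1 hi).1).2
  refine h.add ((Reaches.replace_singletons (hlt A) (hlt A') ?_).add_right _)
  have h1 : A ⊆ Finset.univ.filter fun i : Fin n => (i : ℕ) < l := fun i hi => by
    simpa using hA i hi
  have h2 : A' ⊆ Finset.univ.filter fun i : Fin n => (i : ℕ) < l := fun i hi => by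
    simpa using hA' i hi
  rw [Finset.card_val, Finset.card_val, Finset.card_sdiff_of_subset h1,
    Finset.card_sdiff_of_subset h2, hcard]

/-- The weight of a block: elements below `l` have weight `1`, the others have weight `a`. -/
def blockWeight {n : ℕ} (a l : ℕ) (B : Multiset (Fin n)) : ℕ :=
  (B.map fun i : Fin n => if (i : ℕ) < l then 1 else a).sum

theorem blockWeight_add {n : ℕ} (a l : ℕ) (B C : Multiset (Fin n)) :
    blockWeight a l (B + C) = blockWeight a l B + blockWeight a l C := by
  simp [blockWeight]

theorem blockWeight_eq_countP {n : ℕ} (a l : ℕ) (B : Multiset (Fin n)) :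
    blockWeight a l B = B.countP (fun i : Fin n => (i : ℕ) < l) +
      a * B.countP (fun i : Fin n => ¬ (i : ℕ) < l) := by
  induction B using Multiset.induction_on with
  | empty => simp [blockWeight]
  | cons i B ih =>
    rw [← Multiset.singleton_add, blockWeight_add, ih, Multiset.singleton_add,
      Multiset.countP_cons, Multiset.countP_cons]
    by_cases h : (i : ℕ) < l
    · simp only [blockWeight, Multiset.map_singleton, Multiset.sum_singleton, h, if_true, not_true,
        if_false]
      ring
    · simp only [blockWeight, Multiset.map_singleton, Multiset.sum_singleton, h, if_true,
        not_false_eq_true, if_false]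
      ring

theorem IsCube.sum_mul_eq {n : ℕ} {x : Fin n → ℝ} (hx : IsCube x) (c : Fin n → ℝ) :
    ∑ i, c i * x i = ∑ i with x i = 1, c i - ∑ i with x i = -1, c i := by
  rw [Finset.sum_filter, Finset.sum_filter, ← Finset.sum_sub_distrib]
  refine Finset.sum_congr rfl fun i _ => ?_
  rcases hx i with h | h | h <;> rw [h] <;> norm_num

theorem blockWeight_plusM_eq_minusM {a n l : ℕ} {x : Fin n → ℝ} (hx : x ∈ weightCut a n l) :
    blockWeight a l (plusM x) = blockWeight a l (minusM x) := by
  have h := hx.2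
  rw [hx.1.sum_mul_eq, sub_eq_zero] at h
  change ∑ i with x i = 1, (if (i : ℕ) < l then 1 else a) =
    ∑ i with x i = -1, (if (i : ℕ) < l then 1 else a)
  exact_mod_cast h

/-- The number of disjoint portions of weight `a` that can be packed into the blocks of `A`. -/
def packing {n : ℕ} (a l : ℕ) (A : Multiset (Multiset (Fin n))) : ℕ :=
  (A.map fun B => blockWeight a l B / a).sum

theorem DownStep.packing_le {a n l : ℕ} {A A' : Multiset (Multiset (Fin n))}
    (h : DownStep (weightCut a n l) A A') : packing a l A ≤ packing a l A' := by
  cases h with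
  | merge B₁ B₂ rest =>
    simp only [packing, Multiset.map_cons, Multiset.sum_cons, blockWeight_add, ← add_assoc]
    gcongr
    exact Nat.div_add_div_le_add_div
  | swap B₁ rest x hx hsub =>
    obtain ⟨C, rfl⟩ := Multiset.le_iff_exists_add.1 hsub
    simp only [packing, Multiset.map_cons, Multiset.sum_cons, add_tsub_cancel_left,
      blockWeight_add, blockWeight_plusM_eq_minusM hx]
    rw [add_comm (blockWeight a l C)]

theorem Reaches.packing_le {a n l : ℕ} {A A' : Multiset (Multiset (Fin n))}
    (h : Reaches (weightCut a n l) A A') : packing a l A ≤ packing a l A' := by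
  induction h with
  | refl => exact le_rfl
  | tail _ h ih => exact ih.trans h.packing_le

theorem packing_eq {a n l : ℕ} (ha : 0 < a) (A : Multiset (Multiset (Fin n))) :
    packing a l A = A.sum.countP (fun i : Fin n => ¬ (i : ℕ) < l) +
      (A.map fun B => B.countP (fun i : Fin n => (i : ℕ) < l) / a).sum := by
  induction A using Multiset.induction_on with
  | empty => simp [packing]
  | cons B A ih =>
    have h : packing a l (B ::ₘ A) = blockWeight a l B / a + packing a l A := by simp [packing]
    rw [h, ih, blockWeight_eq_countP, Nat.add_mul_div_left _ _ ha, Multiset.sum_cons,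
      Multiset.countP_add, Multiset.map_cons, Multiset.sum_cons]
    ring

theorem onlyBlock_sum {n : ℕ} (A : Finset (Fin n)) :
    (onlyBlock A).sum = (Finset.univ : Finset (Fin n)).val := by
  rw [onlyBlock, Multiset.sum_cons, Multiset.sum_map_singleton, Finset.sdiff_val]
  exact add_tsub_cancel_of_le (Finset.val_le_iff.2 (Finset.subset_univ A))

theorem exists_block_of_reaches {a n l : ℕ} (ha : 0 < a) {A : Finset (Fin n)}
    (hA : ∀ i ∈ A, (i : ℕ) < l) (hcard : A.card = a) {ρ : Multiset (Multiset (Fin n))}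
    (hρ : IsPartitionM ρ) (h : Reaches (weightCut a n l) (onlyBlock A) ρ) :
    ∃ B ∈ ρ, a ≤ B.countP fun i : Fin n => (i : ℕ) < l := by
  by_contra! hlt
  have hle := h.packing_le
  rw [packing_eq ha, packing_eq ha, hρ.sum_eq, onlyBlock_sum, add_le_add_iff_left] at hle
  have h0 : (ρ.map fun B => B.countP (fun i : Fin n => (i : ℕ) < l) / a).sum = 0 := by
    refine Multiset.sum_eq_zero fun m hm => ?_
    obtain ⟨B, hB, rfl⟩ := Multiset.mem_map.1 hm
    exact Nat.div_eq_of_lt (hlt B hB)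
  have h1 : A.val.countP (fun i : Fin n => (i : ℕ) < l) = a := by
    rw [Multiset.countP_eq_card.2 hA, Finset.card_val, hcard]
  rw [h0, onlyBlock, Multiset.map_cons, Multiset.sum_cons, h1, Nat.div_self ha] at hle
  omega

theorem reaches_of_exists_block {a n l : ℕ} {A : Finset (Fin n)}
    (hA : ∀ i ∈ A, (i : ℕ) < l) (hcard : A.card = a) {ρ : Multiset (Multiset (Fin n))}
    (hρ : IsPartitionM ρ) (h : ∃ B ∈ ρ, a ≤ B.countP fun i : Fin n => (i : ℕ) < l) :
    Reaches (weightCut a n l) (onlyBlock A) ρ := by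
  obtain ⟨B, hB, hle⟩ := h
  rw [Multiset.countP_eq_card_filter] at hle
  have hnodup : (B.filter fun i : Fin n => (i : ℕ) < l).Nodup :=
    Multiset.nodup_of_le ((Multiset.filter_le _ _).trans
      (Multiset.single_le_sum (fun _ _ => zero_le) B hB)) hρ.2.1
  obtain ⟨C, hC, hCcard⟩ := Finset.exists_subset_card_eq
    (s := ⟨B.filter fun i : Fin n => (i : ℕ) < l, hnodup⟩) hle
  exact (Reaches.onlyBlock hA (fun i hi => (Multiset.mem_filter.1 (hC hi)).2)
    (hcard.trans hCcard.symm)).trans (Reaches.of_le_block hρ hB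
      ((Finset.val_le_iff.2 hC).trans (Multiset.filter_le _ _)))

theorem mem_downClos_firstBlock_iff {a n l : ℕ} (ha : 0 < a) (hal : a ≤ l) (hln : l ≤ n)
    {ρ : Multiset (Multiset (Fin n))} :
    ρ ∈ downClos (weightCut a n l) (firstBlock a n) ↔
      IsPartitionM ρ ∧ ∃ B ∈ ρ, a ≤ B.countP fun i : Fin n => (i : ℕ) < l := by
  have hA : ∀ i ∈ Finset.univ.filter (fun i : Fin n => (i : ℕ) < a), (i : ℕ) < l :=
    fun i hi => (Finset.mem_filter.1 hi).2.trans_le hal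
  have hcard : (Finset.univ.filter fun i : Fin n => (i : ℕ) < a).card = a := by
    rw [Fin.card_filter_val_lt, min_eq_right (hal.trans hln)]
  exact and_congr_right fun hρ =>
    ⟨exists_block_of_reaches ha hA hcard hρ, reaches_of_exists_block hA hcard hρ⟩

theorem eq_zero_of_blockWeight_eq_zero {a n l : ℕ} (ha : 0 < a) {B : Multiset (Fin n)}
    (h : blockWeight a l B = 0) : B = 0 := by
  refine Multiset.eq_zero_of_forall_notMem fun i hi => ?_
  have h' := Multiset.sum_eq_zero_iff.1 h _ (Multiset.mem_map_of_mem _ hi)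
  split_ifs at h'
  omega

theorem eq_zero_of_plusM_of_minusM {n : ℕ} {x : Fin n → ℝ} (hx : IsCube x) (hp : plusM x = 0)
    (hm : minusM x = 0) : x = 0 := by
  rw [plusM, Finset.val_eq_zero, Finset.filter_eq_empty_iff] at hp
  rw [minusM, Finset.val_eq_zero, Finset.filter_eq_empty_iff] at hm
  funext i
  rcases hx i with h | h | h
  · exact absurd h (hm (Finset.mem_univ i))
  · exact h
  · exact absurd h (hp (Finset.mem_univ i))

theorem partOf_sum {n : ℕ} {x : Fin n → ℝ} (hx : IsCube x) :
    (partOf x).sum = (Finset.univ : Finset (Fin n)).val := by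
  rw [partOf, Multiset.sum_cons, Multiset.sum_cons, Multiset.sum_map_singleton, plusM, minusM]
  ext i
  simp only [Multiset.count_add, Finset.filter_val, Multiset.count_filter]
  rcases hx i with h | h | h <;> norm_num [h]

theorem isPartitionM_partOf {a n l : ℕ} (ha : 0 < a) {x : Fin n → ℝ}
    (hx : x ∈ weightCut a n l) (hx0 : x ≠ 0) : IsPartitionM (partOf x) := by
  have hw := blockWeight_plusM_eq_minusM hx
  refine ⟨fun B hB => ?_, ?_, fun i => ?_⟩
  · rw [partOf, Multiset.mem_cons, Multiset.mem_cons, Multiset.mem_map] at hB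
    rcases hB with rfl | rfl | ⟨i, -, rfl⟩
    · intro h
      rw [h] at hw
      exact hx0 (eq_zero_of_plusM_of_minusM hx.1 h (eq_zero_of_blockWeight_eq_zero ha hw.symm))
    · intro h
      rw [h] at hw
      exact hx0 (eq_zero_of_plusM_of_minusM hx.1 (eq_zero_of_blockWeight_eq_zero ha hw) h)
    · exact Multiset.singleton_ne_zero i
  · rw [partOf_sum hx.1]
    exact Finset.univ.nodup
  · rw [partOf_sum hx.1]
    exact Finset.mem_univ i

theorem mem_cutMinus_weightCut_iff {a n l : ℕ} (ha : 2 ≤ a) (hal : a ≤ l) (hln : l ≤ n)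
    {x : Fin n → ℝ} :
    x ∈ cutMinus (weightCut a n l) (downClos (weightCut a n l) (firstBlock a n)) ↔
      x ∈ weightCut a n l ∧
        (Finset.univ.filter fun i : Fin n => (i : ℕ) < l ∧ x i = 1).card < a ∧
        (Finset.univ.filter fun i : Fin n => (i : ℕ) < l ∧ x i = -1).card < a := by
  have hcount : ∀ c : ℝ, (Finset.univ.filter fun i : Fin n => x i = c).val.countP
      (fun i : Fin n => (i : ℕ) < l) =
      (Finset.univ.filter fun i : Fin n => (i : ℕ) < l ∧ x i = c).card := fun c => by
    rw [Multiset.countP_eq_card_filter, ← Finset.filter_val, Finset.filter_filter,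
      Finset.card_val]
    simp only [and_comm]
  refine and_congr_right fun hx => ?_
  rw [mem_downClos_firstBlock_iff (by omega) hal hln]
  rcases eq_or_ne x 0 with rfl | hx0
  · refine ⟨fun _ => by simp; omega, fun _ h => ?_⟩
    exact h.1.1 0 (by simp [partOf, plusM]) rfl
  rw [← hcount, ← hcount]
  simp only [isPartitionM_partOf (by omega) hx hx0, true_and, not_exists, not_and, not_le]
  constructor
  · intro h
    exact ⟨h _ (Multiset.mem_cons_self _ _),
      h _ (Multiset.mem_cons_of_mem (Multiset.mem_cons_self _ _))⟩
  · rintro ⟨hp, hm⟩ B hB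
    rw [partOf, Multiset.mem_cons, Multiset.mem_cons, Multiset.mem_map] at hB
    rcases hB with rfl | rfl | ⟨i, -, rfl⟩
    · exact hp
    · exact hm
    · exact lt_of_le_of_lt (Multiset.countP_le_card _ _) (by rw [Multiset.card_singleton]; omega)

theorem IsCube.sum_ite_eq {n : ℕ} {x : Fin n → ℝ} (hx : IsCube x) (p : Fin n → Prop)
    [DecidablePred p] :
    ∑ i, (if p i then x i else 0) = ((Finset.univ.filter fun i => p i ∧ x i = 1).card : ℝ) -
      (Finset.univ.filter fun i => p i ∧ x i = -1).card := by
  have h := hx.sum_mul_eq fun i => if p i then 1 else 0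
  simp only [ite_mul, one_mul, zero_mul] at h
  rw [h, Finset.sum_boole, Finset.sum_boole, Finset.filter_filter, Finset.filter_filter]
  simp only [and_comm]

theorem sum_weight_mul_eq {n : ℕ} (a l : ℕ) (x : Fin n → ℝ) :
    ∑ i : Fin n, (if (i : ℕ) < l then 1 else (a : ℝ)) * x i =
      ∑ i : Fin n, (if (i : ℕ) < l then x i else 0) +
        a * ∑ i : Fin n, (if l ≤ (i : ℕ) then x i else 0) := by
  rw [Finset.mul_sum, ← Finset.sum_add_distrib]
  refine Finset.sum_congr rfl fun i _ => ?_
  by_cases h : (i : ℕ) < l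
  · simp [h]
  · simp [h, not_lt.1 h]

theorem cutMinus_weightCut {a n l : ℕ} (ha : 2 ≤ a) (hal : a ≤ l) (hln : l ≤ n) :
    cutMinus (weightCut a n l) (downClos (weightCut a n l) (firstBlock a n)) =
      {x | IsCube x ∧ (∑ i : Fin n, if (i : ℕ) < l then x i else 0) = 0 ∧
        (∑ i : Fin n, if l ≤ (i : ℕ) then x i else 0) = 0 ∧
        (Finset.univ.filter (fun i : Fin n => (i : ℕ) < l ∧ x i = 1)).card < a} := by
  ext x
  rw [mem_cutMinus_weightCut_iff ha hal hln]
  refine ⟨fun ⟨⟨hx, hsum⟩, hp, hm⟩ => ?_, fun ⟨hx, h1, h2, hp⟩ => ?_⟩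
  · refine ⟨hx, ?_⟩
    rw [sum_weight_mul_eq, hx.sum_ite_eq, hx.sum_ite_eq] at hsum
    rw [hx.sum_ite_eq, hx.sum_ite_eq]
    generalize (Finset.univ.filter fun i : Fin n => (i : ℕ) < l ∧ x i = 1).card = p at *
    generalize (Finset.univ.filter fun i : Fin n => (i : ℕ) < l ∧ x i = -1).card = m at *
    generalize (Finset.univ.filter fun i : Fin n => l ≤ (i : ℕ) ∧ x i = 1).card = q at *
    generalize (Finset.univ.filter fun i : Fin n => l ≤ (i : ℕ) ∧ x i = -1).card = r at *
    have hz : (p : ℤ) - m = a * (r - q) := by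
      have : (p : ℝ) - m = a * (r - q) := by linarith
      exact_mod_cast this
    have h0 : (p : ℤ) - m = 0 :=
      Int.eq_zero_of_abs_lt_dvd ⟨_, hz⟩ (abs_lt.2 ⟨by omega, by omega⟩)
    have h1 : (r : ℤ) - q = 0 := by
      rw [h0] at hz
      exact (mul_eq_zero.1 hz.symm).resolve_left (by omega)
    have hpm : p = m := by omega
    have hrq : r = q := by omega
    subst hpm hrq
    exact ⟨sub_self _, sub_self _, hp⟩
  · refine ⟨⟨hx, by rw [sum_weight_mul_eq, h1, h2]; simp⟩, hp, ?_⟩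
    rw [hx.sum_ite_eq, sub_eq_zero, Nat.cast_inj] at h1
    exact h1 ▸ hp

theorem TOnes_eq_weightCut (a l : ℕ) : TOnes l = weightCut a l l := by
  simp [TOnes, weightCut]

/-- The elements of a multiset that lie below `l`. -/
def lowPart {n : ℕ} (l : ℕ) (B : Multiset (Fin n)) : Multiset (Fin l) :=
  B.filterMap fun i : Fin n => if h : (i : ℕ) < l then some (⟨(i : ℕ), h⟩ : Fin l) else none

theorem card_lowPart {n : ℕ} (l : ℕ) (B : Multiset (Fin n)) :
    (lowPart l B).card = B.countP fun i : Fin n => (i : ℕ) < l := by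
  induction B using Multiset.induction_on with
  | empty => simp [lowPart]
  | cons i B ih =>
    rw [lowPart] at ih
    by_cases h : (i : ℕ) < l
    · rw [Multiset.countP_cons_of_pos (p := fun i : Fin n => (i : ℕ) < l) _ h, ← ih, lowPart,
        Multiset.filterMap_cons_some _ _ _ (dif_pos h), Multiset.card_cons]
    · rw [Multiset.countP_cons_of_neg (p := fun i : Fin n => (i : ℕ) < l) _ h, ← ih, lowPart,
        Multiset.filterMap_cons_none _ _ (dif_neg h)]

theorem restrictFirst_eq {n : ℕ} (l : ℕ) (ρ : Multiset (Multiset (Fin n))) :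
    restrictFirst l ρ = (ρ.map (lowPart l)).filter fun B => B ≠ 0 := by
  rw [restrictFirst]
  congr 1
  refine Multiset.map_congr rfl fun B _ => ?_
  have hmap : (do let i ← B; pure (i : ℕ)) = B.map (fun i : Fin n => (i : ℕ)) :=
    Multiset.bind_singleton B _
  rw [hmap, Multiset.filterMap_map]
  rfl

theorem restrictFirst_sum {n : ℕ} (l : ℕ) (ρ : Multiset (Multiset (Fin n))) :
    (restrictFirst l ρ).sum = lowPart l ρ.sum := by
  induction ρ using Multiset.induction_on with
  | empty => simp [restrictFirst, lowPart]
  | cons B ρ ih =>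
    rw [Multiset.sum_cons, lowPart, Multiset.filterMap_add, ← lowPart, ← lowPart, ← ih,
      restrictFirst_eq, restrictFirst_eq, Multiset.map_cons]
    by_cases h : lowPart l B = 0
    · rw [Multiset.filter_cons_of_neg (p := fun B : Multiset (Fin l) => B ≠ 0) _ (not_not.2 h), h,
        zero_add]
    · rw [Multiset.filter_cons_of_pos (p := fun B : Multiset (Fin l) => B ≠ 0) _ h,
        Multiset.sum_cons]

theorem IsPartitionM.restrictFirst {n l : ℕ} (hln : l ≤ n) {ρ : Multiset (Multiset (Fin n))}
    (hρ : IsPartitionM ρ) : IsPartitionM (restrictFirst l ρ) := by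
  refine ⟨fun B hB => (Multiset.mem_filter.1 hB).2, ?_, fun i => ?_⟩
  · rw [restrictFirst_sum]
    refine hρ.2.1.filterMap _ fun i j b hi hj => ?_
    split_ifs at hi hj <;> simp_all [Fin.ext_iff]
  · rw [restrictFirst_sum, lowPart, Multiset.mem_filterMap]
    exact ⟨Fin.castLE hln i, hρ.2.2 _, by simp⟩

theorem exists_block_restrictFirst_iff {a n l : ℕ} (ha : 0 < a)
    (ρ : Multiset (Multiset (Fin n))) :
    (∃ B ∈ restrictFirst l ρ, a ≤ B.countP fun i : Fin l => (i : ℕ) < l) ↔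
      ∃ B ∈ ρ, a ≤ B.countP fun i : Fin n => (i : ℕ) < l := by
  have hall : ∀ B : Multiset (Fin l), B.countP (fun i : Fin l => (i : ℕ) < l) = B.card :=
    fun B => Multiset.countP_eq_card.2 fun i _ => i.2
  rw [restrictFirst_eq]
  constructor
  · rintro ⟨B, hB, hle⟩
    obtain ⟨C, hC, rfl⟩ := Multiset.mem_map.1 (Multiset.mem_filter.1 hB).1
    exact ⟨C, hC, by rwa [hall, card_lowPart] at hle⟩
  · rintro ⟨C, hC, hle⟩
    rw [← card_lowPart] at hle
    refine ⟨lowPart l C, Multiset.mem_filter.2 ⟨Multiset.mem_map_of_mem _ hC, ?_⟩, ?_⟩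
    · intro h
      rw [h, Multiset.card_zero] at hle
      omega
    · rwa [hall]

theorem downClos_weightCut_eq {a n l : ℕ} (ha : 0 < a) (hal : a ≤ l) (hln : l ≤ n) :
    downClos (weightCut a n l) (firstBlock a n) =
      {ρ | IsPartitionM ρ ∧ restrictFirst l ρ ∈ downClos (TOnes l) (firstBlock a l)} := by
  ext ρ
  rw [Set.mem_ofPred_eq, TOnes_eq_weightCut a, mem_downClos_firstBlock_iff ha hal hln,
    mem_downClos_firstBlock_iff ha hal le_rfl, exists_block_restrictFirst_iff ha]
  exact ⟨fun h => ⟨h.1, h.1.restrictFirst hln, h.2⟩, fun h => ⟨h.1, h.2.2⟩⟩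

theorem cutMinus_TOnes {a l : ℕ} (ha : 2 ≤ a) (hal : a ≤ l) :
    cutMinus (TOnes l) (downClos (TOnes l) (firstBlock a l)) =
      {z | z ∈ TOnes l ∧ (Finset.univ.filter (fun i : Fin l => z i = 1)).card < a} := by
  conv_lhs => rw [TOnes_eq_weightCut a, cutMinus_weightCut ha hal le_rfl]
  ext z
  have hlarge : ∑ i : Fin l, (if l ≤ (i : ℕ) then z i else 0) = 0 :=
    Finset.sum_eq_zero fun i _ => if_neg (not_le.2 i.2)
  simp [TOnes, and_assoc, hlarge]

/-- the structure of the relative cut `Q(S, π↓S)` for the resonance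
`(a^k, 1^l)`, where `π` has unique non-singleton block `{1,…,a}`. -/
theorem relative_cut_ak_ones (a k l : ℕ) (ha : 2 ≤ a) (hk : 1 ≤ k) (hal : a ≤ l) :
    -- (i)
    downClos (SAK a k l) (firstBlock a (l + k)) =
      {ρ | IsPartitionM ρ ∧ restrictFirst l ρ ∈ downClos (TOnes l) (firstBlock a l)} ∧
    -- (ii)
    cutMinus (SAK a k l) (downClos (SAK a k l) (firstBlock a (l + k))) =
      {x | IsCube x ∧ (∑ i : Fin (l + k), if (i : ℕ) < l then x i else 0) = 0 ∧
        (∑ i : Fin (l + k), if l ≤ (i : ℕ) then x i else 0) = 0 ∧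
        (Finset.univ.filter (fun i : Fin (l + k) => (i : ℕ) < l ∧ x i = 1)).card < a} ∧
    -- (iii)
    cutMinus (TOnes l) (downClos (TOnes l) (firstBlock a l)) =
      {z | z ∈ TOnes l ∧ (Finset.univ.filter (fun i : Fin l => z i = 1)).card < a} ∧
    cutMinus (SAK a k l) (downClos (SAK a k l) (firstBlock a (l + k))) =
      {x | IsCube x ∧
        (fun i : Fin l => x (Fin.castLE (Nat.le_add_right l k) i)) ∈
          cutMinus (TOnes l) (downClos (TOnes l) (firstBlock a l)) ∧
        (∑ i : Fin (l + k), if l ≤ (i : ℕ) then x i else 0) = 0} := by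
  have hln : l ≤ l + k := Nat.le_add_right l k
  refine ⟨downClos_weightCut_eq (by omega) hal hln, cutMinus_weightCut ha hal hln,
    cutMinus_TOnes ha hal, ?_⟩
  refine (cutMinus_weightCut ha hal hln).trans ?_
  rw [cutMinus_TOnes ha hal]
  ext x
  have hsum : ∑ i : Fin (l + k), (if (i : ℕ) < l then x i else 0) =
      ∑ i : Fin l, x (Fin.castLE hln i) := by
    rw [Fin.sum_univ_add]
    simp [Fin.castAdd]
  have hcard : (Finset.univ.filter fun i : Fin (l + k) => (i : ℕ) < l ∧ x i = 1).card =
      (Finset.univ.filter fun i : Fin l => x (Fin.castLE hln i) = 1).card := by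
    rw [Finset.card_filter, Finset.card_filter, Fin.sum_univ_add]
    simp [Fin.castAdd]
  simp only [Set.mem_ofPred_eq, TOnes, hsum, hcard]
  exact ⟨fun ⟨hx, h1, h2, h3⟩ => ⟨hx, ⟨⟨fun i => hx _, h1⟩, h3⟩, h2⟩,
    fun ⟨hx, ⟨⟨_, h1⟩, h3⟩, h2⟩ => ⟨hx, h1, h2, h3⟩⟩
end

section
/- Let λ = (λ_1 ≤ … ≤ λ_n) be a sequential nondecreasing sequence of positive integers for which I(λ) exists, let t = n − |I(λ)|, and let {j_1 < … < j_t} = [n] ∖ I(λ). Then the nondecreasing sequence λ̄ = (λ_{j_1},…,λ_{j_t}, λ_n) of length t+1, consisting of the parts of λ outside I(λ) together with one new part Σ_{i∈I(λ)} λ_i = λ_n, is sequential. -/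
/-- A sequence `λ : [n] → ℕ` is sequential if whenever `Σ_{i∈I} λ_i = Σ_{j∈J} λ_j`
and `q ∈ I` is the maximum of `I ∪ J`, some subset `J' ⊆ J` has `Σ_{j∈J'} λ_j = λ_q`. -/
def IsSequentialSeq {n : ℕ} (lam : Fin n → ℕ) : Prop :=
  ∀ I J : Finset (Fin n), ∑ i ∈ I, lam i = ∑ j ∈ J, lam j →
    ∀ q ∈ I, (∀ p ∈ I ∪ J, p ≤ q) → ∃ J' ⊆ J, lam q = ∑ j ∈ J', lam j

/-- `A` is lexicographically larger than `B`: either `B ⊆ A`, or, writing the elements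
increasingly, the largest `q` elements agree and the next one of `A` is bigger. -/
def LexLarger {n : ℕ} (A B : Finset (Fin n)) : Prop :=
  B ⊆ A ∨ ∃ q : ℕ, q < min A.card B.card ∧
    (∀ i : ℕ, i < q →
      (A.sort (· ≤ ·))[A.card - 1 - i]? = (B.sort (· ≤ ·))[B.card - 1 - i]?) ∧
    ∃ x y : Fin n, (A.sort (· ≤ ·))[A.card - 1 - q]? = some x ∧
      (B.sort (· ≤ ·))[B.card - 1 - q]? = some y ∧ y < x

/-- A subset `I` of `[n+1]` with at least two elements whose `λ`-sum is the last
(largest) part of `λ`. -/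
def GoodSet {n : ℕ} (lam : Fin (n + 1) → ℕ) (I : Finset (Fin (n + 1))) : Prop :=
  2 ≤ I.card ∧ ∑ i ∈ I, lam i = lam (Fin.last n)

/-- `I` is the set `I(λ)`: a good set which is lexicographically larger than every
other good set. -/
def IsIlam {n : ℕ} (lam : Fin (n + 1) → ℕ) (I : Finset (Fin (n + 1))) : Prop :=
  GoodSet lam I ∧ ∀ J, GoodSet lam J → LexLarger I J

/-- A sequential `λ` is strongly sequential if either no good set exists, or `I(λ)`
exists and, with `q = max I(λ)`, some `J ⊆ I(λ) ∖ {q}` has `Σ_{j∈J} λ_j = λ_q`. -/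
def StronglySequential {n : ℕ} (lam : Fin (n + 1) → ℕ) : Prop :=
  IsSequentialSeq lam ∧
  ((∀ I, ¬ GoodSet lam I) ∨
    ∃ I, IsIlam lam I ∧ ∃ q ∈ I, (∀ p ∈ I, p ≤ q) ∧
      ∃ J ⊆ I.erase q, lam q = ∑ j ∈ J, lam j)

open Finset in
/-- A finite subset of `Fin (t + 1)` that misses the last element comes from `Fin t`. -/
theorem exists_eq_map_castSuccEmb {t : ℕ} {S : Finset (Fin (t + 1))} (hS : Fin.last t ∉ S) :
    ∃ T : Finset (Fin t), S = T.map Fin.castSuccEmb := by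
  refine ⟨univ.filter fun i => i.castSucc ∈ S, ?_⟩
  ext x
  induction x using Fin.lastCases with
  | last => simp [hS, Fin.castSucc_ne_last]
  | cast i => simp

open Finset in
/-- Appending to a subsequence of a sequential sequence a copy of the last part is again
sequential, provided the last part is a sum of parts outside the subsequence. -/
theorem IsSequentialSeq.snoc_last {n t : ℕ} {lam : Fin (n + 1) → ℕ} (hseq : IsSequentialSeq lam)
    (e : Fin t ↪o Fin (n + 1)) (I : Finset (Fin (n + 1))) (he : ∀ i, e i ∉ I)
    (hI : ∑ i ∈ I, lam i = lam (Fin.last n)) (f : Fin (t + 1) → ℕ)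
    (hf : ∀ i : Fin t, f i.castSucc = lam (e i)) (hlast : f (Fin.last t) = lam (Fin.last n)) :
    IsSequentialSeq f := by
  have hsum (T : Finset (Fin t)) :
      ∑ i ∈ T.map Fin.castSuccEmb, f i = ∑ i ∈ T.map e.toEmbedding, lam i := by
    simp [hf]
  have hlift {T : Finset (Fin t)} {x : ℕ}
      (h : ∃ J' ⊆ T.map e.toEmbedding, x = ∑ j ∈ J', lam j) :
      ∃ J' ⊆ T.map Fin.castSuccEmb, x = ∑ j ∈ J', f j := by
    obtain ⟨J', hJ', rfl⟩ := h
    obtain ⟨U, hU, rfl⟩ := subset_map_iff.mp hJ'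
    exact ⟨U.map Fin.castSuccEmb, map_subset_map.mpr hU, (hsum U).symm⟩
  intro A B hAB q hq hmax
  by_cases hB : Fin.last t ∈ B
  · have hqt : q = Fin.last t :=
      le_antisymm (Fin.le_last q) (hmax _ (mem_union_right _ hB))
    exact ⟨{q}, by simpa [hqt] using hB, by simp⟩
  obtain ⟨B, rfl⟩ := exists_eq_map_castSuccEmb hB
  rw [hsum] at hAB
  induction q using Fin.lastCases with
  | last =>
    obtain ⟨A', hA'⟩ := exists_eq_map_castSuccEmb (notMem_erase (Fin.last t) A)
    rw [← add_sum_erase A f hq, hA', hsum, hlast] at hAB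
    rw [hlast]
    apply hlift
    by_cases hN : Fin.last n ∈ A'.map e.toEmbedding
    · refine hseq (I ∪ A'.map e.toEmbedding) _ ?_ _ (mem_union_right _ hN)
        fun p _ => Fin.le_last p
      rw [sum_union, hI, hAB]
      rw [disjoint_right]
      intro x hx
      obtain ⟨i, -, rfl⟩ := mem_map.mp hx
      exact he i
    · refine hseq (insert (Fin.last n) (A'.map e.toEmbedding)) _ ?_ _ (mem_insert_self _ _)
        fun p _ => Fin.le_last p
      rw [sum_insert hN, hAB]
  | cast q =>
    have hA : Fin.last t ∉ A := fun h =>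
      (Fin.castSucc_lt_last q).not_ge (hmax _ (mem_union_left _ h))
    obtain ⟨A, rfl⟩ := exists_eq_map_castSuccEmb hA
    rw [hsum] at hAB
    rw [hf]
    refine hlift (hseq _ _ hAB _ (mem_map_of_mem _ (by simpa using hq)) ?_)
    rw [← map_union] at hmax ⊢
    intro p hp
    obtain ⟨i, hi, rfl⟩ := mem_map.mp hp
    have := hmax i.castSucc (mem_map_of_mem Fin.castSuccEmb hi)
    simpa using this

/-- removing the parts indexed by `I(λ)` and adding one new part
`Σ_{i∈I(λ)} λ_i = λ_{max}` yields again a sequential nondecreasing sequence. -/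
theorem sequential_contraction {n : ℕ} (lam : Fin (n + 1) → ℕ)
    (hpos : ∀ i, 0 < lam i) (hmono : Monotone lam) (hseq : IsSequentialSeq lam)
    (I : Finset (Fin (n + 1))) (hI : IsIlam lam I)
    (t : ℕ) (ht : t = (Finset.univ \ I).card) :
    IsSequentialSeq (fun i : Fin (t + 1) =>
      if (i : ℕ) < t then
        lam (((Finset.univ \ I).sort (· ≤ ·)).getD (i : ℕ) (Fin.last n))
      else lam (Fin.last n)) := by
  refine hseq.snoc_last ((Finset.univ \ I).orderEmbOfFin ht.symm) I
    (fun i => (Finset.mem_sdiff.mp (Finset.orderEmbOfFin_mem _ ht.symm i)).2) hI.1.2 _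
    (fun i => ?_) (by simp)
  subst ht
  have hi : (i : ℕ) < ((Finset.univ \ I).sort (· ≤ ·)).length := by simp
  simp only [Fin.val_castSucc, i.isLt, if_true]
  rw [List.getD_eq_getElem _ _ hi, Finset.orderEmbOfFin_apply]
  rfl
end

section
/- Let λ = (λ_1 ≤ … ≤ λ_n) be a sequential nondecreasing sequence of positive integers for which I(λ) exists, let S = S_λ = {x ∈ {-1,0,1}^n : Σ_{i=1}^n λ_i x_i = 0} be the cut associated to λ, and let π ∈ P(n) be the partition whose only non-singleton block is I(λ). If τ ∈ P(n) is a partition with exactly one non-singleton block B, where |B| ≥ 2 and Σ_{i∈B} λ_i = λ_n, then τ ∈ π↓S. -/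
/-- The cut associated to a sequence `λ`: cube vectors orthogonal to `λ`. -/
noncomputable def cutOf {n : ℕ} (lam : Fin n → ℕ) : Set (Fin n → ℝ) :=
  {x | IsCube x ∧ ∑ i, (lam i : ℝ) * x i = 0}

open Relation

/-- If `A` is lexicographically larger than `B` but does not contain it, then some element of
`A ∖ B` is such that all larger elements of `B` lie in `A`. -/
lemma LexLarger.exists_mem_not_mem {n : ℕ} {A B : Finset (Fin n)} (h : LexLarger A B)
    (hBA : ¬ B ⊆ A) : ∃ x ∈ A, x ∉ B ∧ ∀ z ∈ B, x < z → z ∈ A := by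
  obtain ⟨q, hq, hagree, x, y, hx, hy, hyx⟩ := h.resolve_left hBA
  have hqA : q < A.card := lt_of_lt_of_le hq (min_le_left _ _)
  have hqB : q < B.card := lt_of_lt_of_le hq (min_le_right _ _)
  have hindex : ∀ z ∈ B, y < z →
      ∃ i < q, (A.sort (· ≤ ·))[A.card - 1 - i]? = some z := by
    intro z hz hyz
    obtain ⟨p, hp, hpz⟩ := List.getElem_of_mem ((Finset.mem_sort (· ≤ ·)).2 hz)
    have hpB : p < B.card := by simpa using hp
    obtain ⟨hlen, hy'⟩ := List.getElem?_eq_some_iff.1 hy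
    have hlt : B.card - 1 - q < p := by
      by_contra hle
      have hmono := B.sortedLT_sort.strictMono_get.monotone
        (show (⟨p, hp⟩ : Fin _) ≤ ⟨B.card - 1 - q, hlen⟩ from not_lt.1 hle)
      simp only [List.get_eq_getElem] at hmono
      rw [hpz, hy'] at hmono
      exact absurd hyz (not_lt.2 hmono)
    refine ⟨B.card - 1 - p, by omega, ?_⟩
    rw [hagree _ (by omega), show B.card - 1 - (B.card - 1 - p) = p by omega,
      List.getElem?_eq_getElem hp, hpz]
  refine ⟨x, (Finset.mem_sort (· ≤ ·)).1 (List.mem_of_getElem? hx), fun hxB => ?_,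
    fun z hz hxz => ?_⟩
  · obtain ⟨i, hi, hix⟩ := hindex x hxB hyx
    have := (List.getElem?_inj (by simp; omega) (A.sort_nodup (· ≤ ·))).1 (hix.trans hx.symm)
    omega
  · obtain ⟨i, -, hi⟩ := hindex z hz (hyx.trans hxz)
    exact (Finset.mem_sort (· ≤ ·)).1 (List.mem_of_getElem? hi)

/-- A block may be replaced by any other set with the same `λ`-sum. -/
lemma DownStep.replace_of_sum_eq {n : ℕ} {lam : Fin n → ℕ} {P Q : Finset (Fin n)}
    (h : ∑ i ∈ P, lam i = ∑ i ∈ Q, lam i) (R : Multiset (Multiset (Fin n))) :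
    DownStep (cutOf lam) (P.val ::ₘ R) (Q.val ::ₘ R) := by
  classical
  let x : Fin n → ℝ := fun i => (if i ∈ P then 1 else 0) - (if i ∈ Q then 1 else 0)
  have hplus : plusM x = (P \ Q).val := by
    unfold plusM
    congr 1
    ext i
    by_cases hP : i ∈ P <;> by_cases hQ : i ∈ Q <;> simp [x, hP, hQ]
    norm_num
  have hminus : minusM x = (Q \ P).val := by
    unfold minusM
    congr 1
    ext i
    by_cases hP : i ∈ P <;> by_cases hQ : i ∈ Q <;> simp [x, hP, hQ]
    norm_num
  have hx : x ∈ cutOf lam := by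
    refine ⟨fun i => ?_, ?_⟩
    · by_cases hP : i ∈ P <;> by_cases hQ : i ∈ Q <;> simp [x, hP, hQ]
    · simp only [x, mul_sub, mul_ite, mul_one, mul_zero, Finset.sum_sub_distrib,
        Finset.sum_ite_mem, Finset.univ_inter]
      rw [sub_eq_zero]
      exact_mod_cast h
  have hstep := DownStep.swap P.val R x hx (by
    rw [hplus]; exact Finset.val_le_iff.2 Finset.sdiff_subset)
  have hQ : P.val - (P \ Q).val + (Q \ P).val = Q.val := by
    rw [← Finset.sdiff_val, sdiff_sdiff_right_self, Finset.inf_eq_inter,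
      Finset.inter_comm, ← Finset.disjUnion_val _ _
        (Finset.disjoint_sdiff_inter Q P).symm, Finset.disjUnion_eq_union,
      Finset.union_comm, Finset.sdiff_union_inter]
  rwa [hplus, hminus, hQ] at hstep

/-- Singletons can be merged into a single block. -/
lemma reflTransGen_merge_singletons {n : ℕ} (S : Set (Fin n → ℝ)) {s : Multiset (Fin n)}
    (hs : s ≠ 0) (R : Multiset (Multiset (Fin n))) :
    ReflTransGen (DownStep S) (s.map (fun i => {i}) + R) (s ::ₘ R) := by
  induction s using Multiset.induction_on generalizing R with
  | empty => exact absurd rfl hs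
  | cons a s ih =>
    by_cases h0 : s = 0
    · subst h0
      simpa using ReflTransGen.refl
    · have h := ih h0 ({a} ::ₘ R)
      rw [Multiset.map_cons, Multiset.cons_add, ← Multiset.add_cons]
      refine h.tail ?_
      have := DownStep.merge (S := S) s {a} R
      rwa [add_comm, Multiset.singleton_add] at this

/-- Singletons on `J` can be turned into singletons on `K` if `J` can be split greedily into
sets whose `λ`-sums are the values of `λ` on `K`. -/
lemma reflTransGen_singletons {n : ℕ} {lam : Fin n → ℕ} (hpos : ∀ i, 0 < lam i)
    (K J : Finset (Fin n)) (hsum : ∑ i ∈ K, lam i = ∑ i ∈ J, lam i)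
    (hsplit : ∀ K' ⊆ K, ∀ J' ⊆ J, K'.Nonempty → ∑ i ∈ K', lam i = ∑ i ∈ J', lam i →
      ∃ q ∈ K', ∃ T ⊆ J', lam q = ∑ i ∈ T, lam i)
    (R : Multiset (Multiset (Fin n))) :
    ReflTransGen (DownStep (cutOf lam)) (J.val.map (fun i => {i}) + R)
      (K.val.map (fun i => {i}) + R) := by
  classical
  induction K using Finset.strongInduction generalizing J R with
  | H K ih =>
    rcases K.eq_empty_or_nonempty with rfl | hK
    · have hJ : J = ∅ := by
        by_contra hne
        have := Finset.sum_pos (fun i _ => hpos i) (Finset.nonempty_iff_ne_empty.2 hne)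
        simp at hsum
        grind
      subst hJ
      exact ReflTransGen.refl
    · obtain ⟨q, hq, T, hTJ, hT⟩ := hsplit K subset_rfl J subset_rfl hK hsum
      have hT0 : T.val ≠ 0 := by
        rintro h0
        rw [Finset.val_eq_zero.1 h0, Finset.sum_empty] at hT
        exact (hpos q).ne' hT
      have hJval : J.val = T.val + (J \ T).val := by
        rw [Finset.sdiff_val, add_tsub_cancel_of_le (Finset.val_le_iff.2 hTJ)]
      have hKval : K.val = q ::ₘ (K.erase q).val := by
        rw [Finset.erase_val, Multiset.cons_erase hq]
      have hsum' : ∑ i ∈ K.erase q, lam i = ∑ i ∈ J \ T, lam i := by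
        have h₁ := Finset.add_sum_erase K lam hq
        have h₂ := Finset.sum_sdiff (f := lam) hTJ
        omega
      have hrest := ih (K.erase q) (Finset.erase_ssubset hq) (J \ T) hsum'
        (fun K' hK' J' hJ' => hsplit K' (hK'.trans (Finset.erase_subset _ _)) J'
          (hJ'.trans Finset.sdiff_subset)) ({q} ::ₘ R)
      have hmerge := reflTransGen_merge_singletons (cutOf lam) hT0
        ((J \ T).val.map (fun i => {i}) + R)
      have hswap := DownStep.replace_of_sum_eq (lam := lam) (P := T) (Q := {q})
        (by simp [hT]) ((J \ T).val.map (fun i => {i}) + R)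
      rw [hJval, hKval, Multiset.map_add, Multiset.map_cons, add_assoc, Multiset.cons_add,
        ← Multiset.add_cons]
      refine (hmerge.tail hswap).trans ?_
      rw [Finset.singleton_val, ← Multiset.add_cons]
      exact hrest

lemma isPartitionM_onlyBlock {n : ℕ} {B : Finset (Fin n)} (hB : B.Nonempty) :
    IsPartitionM (onlyBlock B) := by
  have hsum : (onlyBlock B).sum = Finset.univ.val := by
    rw [onlyBlock, Multiset.sum_cons, Multiset.sum_map_singleton, Finset.sdiff_val,
      add_tsub_cancel_of_le (Finset.val_le_iff.2 (Finset.subset_univ B))]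
  refine ⟨fun C hC => ?_, ?_, fun i => ?_⟩
  · rcases Multiset.mem_cons.1 hC with rfl | hC
    · exact fun h => hB.ne_empty (Finset.val_eq_zero.1 h)
    · obtain ⟨i, -, rfl⟩ := Multiset.mem_map.1 hC
      exact Multiset.singleton_ne_zero i
  · rw [hsum]
    exact Finset.univ.nodup
  · rw [hsum]
    exact Finset.mem_univ i

/-- If `K ⊆ I(λ) ∖ B` and `J ⊆ B ∖ I(λ)` have equal sums, then the largest element of `K ∪ J`
lies in `K`. -/
lemma IsIlam.max_notMem {n : ℕ} {lam : Fin (n + 1) → ℕ}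
    (hpos : ∀ i, 0 < lam i) (hseq : IsSequentialSeq lam)
    {I B : Finset (Fin (n + 1))} (hI : IsIlam lam I) (hB : GoodSet lam B)
    {K J : Finset (Fin (n + 1))} (hK : K ⊆ I \ B) (hJ : J ⊆ B \ I)
    (hsum : ∑ i ∈ K, lam i = ∑ i ∈ J, lam i)
    {q : Fin (n + 1)} (hmax : ∀ p ∈ J ∪ K, p ≤ q) : q ∉ J := by
  intro hqJ
  obtain ⟨T, hTK, hT⟩ := hseq J K hsum.symm q hqJ hmax
  have hqB : q ∈ B := (Finset.mem_sdiff.1 (hJ hqJ)).1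
  have hqI : q ∉ I := (Finset.mem_sdiff.1 (hJ hqJ)).2
  have hTI : T ⊆ I := hTK.trans (hK.trans Finset.sdiff_subset)
  have hq' : q ∉ I \ T := fun h => hqI (Finset.mem_sdiff.1 h).1
  have hsum' : ∑ i ∈ insert q (I \ T), lam i = lam (Fin.last n) := by
    have := Finset.sum_sdiff (f := lam) hTI
    rw [Finset.sum_insert hq', hT, add_comm, this, hI.1.2]
  have hlt : lam q < lam (Fin.last n) := by
    rw [← hB.2, ← Finset.add_sum_erase B lam hqB]
    have hne : (B.erase q).Nonempty := by
      rw [← Finset.card_pos, Finset.card_erase_of_mem hqB]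
      have := hB.1
      omega
    have := Finset.sum_pos (fun i _ => hpos i) hne
    omega
  have hgood : GoodSet lam (insert q (I \ T)) := by
    refine ⟨?_, hsum'⟩
    rw [Finset.card_insert_of_notMem hq']
    have hne : (I \ T).Nonempty := by
      rw [Finset.nonempty_iff_ne_empty]
      intro h0
      rw [h0] at hsum'
      simp at hsum'
      omega
    have := hne.card_pos
    omega
  obtain ⟨x, hxI, hx, hx'⟩ := (hI.2 _ hgood).exists_mem_not_mem
    (fun h => hqI (h (Finset.mem_insert_self _ _)))
  have hxT : x ∈ T := by
    by_contra hxT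
    exact hx (Finset.mem_insert_of_mem (Finset.mem_sdiff.2 ⟨hxI, hxT⟩))
  have hxq : x < q := lt_of_le_of_ne (hmax x (Finset.mem_union_right _ (hTK hxT)))
    (fun h => hqI (h ▸ hxI))
  exact hqI (hx' q (Finset.mem_insert_self _ _) hxq)

/-- for a sequential `λ` with `I(λ)` existing, any partition `τ` with a
unique non-singleton block `B` satisfying `Σ_{i∈B} λ_i = λ_max` lies in `π↓S`, where
`π` is the partition with unique non-singleton block `I(λ)`. -/
theorem onlyBlock_mem_downClos {n : ℕ} (lam : Fin (n + 1) → ℕ)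
    (hpos : ∀ i, 0 < lam i) (hmono : Monotone lam) (hseq : IsSequentialSeq lam)
    (I : Finset (Fin (n + 1))) (hI : IsIlam lam I)
    (B : Finset (Fin (n + 1))) (hB : 2 ≤ B.card)
    (hBsum : ∑ i ∈ B, lam i = lam (Fin.last n)) :
    onlyBlock B ∈ downClos (cutOf lam) (onlyBlock I) := by
  have hgB : GoodSet lam B := ⟨hB, hBsum⟩
  refine ⟨isPartitionM_onlyBlock (Finset.card_pos.1 (by omega)), ?_⟩
  have hsumIB : ∑ i ∈ I, lam i = ∑ i ∈ B, lam i := hI.1.2.trans hBsum.symm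
  have hcompl : ∀ A C : Finset (Fin (n + 1)),
      (Finset.univ \ A).val = (C \ A).val + (Finset.univ \ (A ∪ C)).val := by
    intro A C
    have hd : Disjoint (C \ A) (Finset.univ \ (A ∪ C)) := by
      rw [Finset.disjoint_left]
      grind
    rw [← Finset.disjUnion_val _ _ hd]
    congr 1
    ext i
    simp only [Finset.mem_sdiff, Finset.mem_disjUnion, Finset.mem_union, Finset.mem_univ]
    tauto
  refine ReflTransGen.head (DownStep.replace_of_sum_eq hsumIB _) ?_
  have hsum : ∑ i ∈ I \ B, lam i = ∑ i ∈ B \ I, lam i :=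
    Finset.sum_sdiff_eq_sum_sdiff_iff.2 hsumIB
  have hmove := reflTransGen_singletons hpos (I \ B) (B \ I) hsum
    (fun K hK J hJ hne hKJ => by
      obtain ⟨q, hq, hmax⟩ := (J ∪ K).exists_max_image id (hne.mono Finset.subset_union_right)
      have hqK : q ∈ K := (Finset.mem_union.1 hq).resolve_left
        (hI.max_notMem hpos hseq hgB hK hJ hKJ hmax)
      exact ⟨q, hqK, hseq K J hKJ q hqK (by rwa [Finset.union_comm])⟩)
    (B.val ::ₘ (Finset.univ \ (I ∪ B)).val.map (fun i => {i}))
  rw [Multiset.add_cons, Multiset.add_cons, ← Multiset.map_add, ← Multiset.map_add,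
    ← hcompl, Finset.union_comm, ← hcompl] at hmove
  exact hmove
end

section
/- Let t ≥ 1, let b_1, …, b_t be positive integers with b_i dividing b_{i+1} for every i = 1,…,t−1, and let m_1,…,m_t ≥ 1 be integers. Then the nondecreasing sequence λ consisting of m_i copies of b_i for each i = 1,…,t is sequential. -/
/-- If the values of `f` on a finite set divide `d` and form a divisibility chain, and their sum
is at least `d`, then some subset sums to exactly `d`. -/
theorem exists_subset_sum_eq_of_dvd_chain {ι : Type*} [LinearOrder ι] (f : ι → ℕ)
    (hf : ∀ i j, i ≤ j → f i ∣ f j) (d : ℕ) (J : Finset ι) :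
    (∀ j ∈ J, f j ∣ d) → d ≤ ∑ j ∈ J, f j → ∃ J' ⊆ J, d = ∑ j ∈ J', f j := by
  induction J using Finset.induction_on_min with
  | empty => exact fun _ h => ⟨∅, subset_rfl, by simpa using h⟩
  | insert a s ha ih =>
    intro hd hle
    by_cases hs : d ≤ ∑ j ∈ s, f j
    · obtain ⟨J', hJ', h⟩ := ih (fun j hj => hd j (Finset.mem_insert_of_mem hj)) hs
      exact ⟨J', hJ'.trans (Finset.subset_insert a s), h⟩
    · refine ⟨insert a s, subset_rfl, hle.antisymm ?_⟩
      have hsum : f a ∣ ∑ j ∈ s, f j := Finset.dvd_sum fun j hj => hf a j (ha j hj).le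
      have hsub := Nat.le_of_dvd (by omega)
        (Nat.dvd_sub (hd a (Finset.mem_insert_self a s)) hsum)
      rw [Finset.sum_insert fun h => (ha a h).false]
      omega

/-- Consecutive divisibility in a finite sequence implies divisibility along `≤`. -/
theorem dvd_of_le_of_dvd_succ {t : ℕ} (b : Fin t → ℕ)
    (hdvd : ∀ i : Fin t, ∀ h : (i : ℕ) + 1 < t, b i ∣ b ⟨(i : ℕ) + 1, h⟩)
    {k l : Fin t} (hkl : k ≤ l) : b k ∣ b l := by
  obtain ⟨l, hl⟩ := l
  change (k : ℕ) ≤ l at hkl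
  induction l, hkl using Nat.le_induction with
  | base => exact dvd_rfl
  | succ l _ ih => exact (ih (by omega)).trans (hdvd ⟨l, by omega⟩ hl)

/-- a nondecreasing sequence consisting of `m_i` copies of `b_i`
(`i = 1,…,t`), where each `b_i` divides `b_{i+1}`, is sequential. -/
theorem division_chain_sequential (t : ℕ) (ht : 1 ≤ t) (b m : Fin t → ℕ)
    (hb : ∀ i, 0 < b i) (hm : ∀ i, 1 ≤ m i)
    (hdvd : ∀ i : Fin t, ∀ h : (i : ℕ) + 1 < t, b i ∣ b ⟨(i : ℕ) + 1, h⟩)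
    (N : ℕ) (lam : Fin N → ℕ) (hmono : Monotone lam)
    (hms : Multiset.map lam Finset.univ.val =
      (Finset.univ.val : Multiset (Fin t)).bind
        (fun i => Multiset.replicate (m i) (b i))) :
    IsSequentialSeq lam := by
  have hval : ∀ i, ∃ k, lam i = b k := by
    intro i
    have hi : lam i ∈ Multiset.map lam Finset.univ.val :=
      Multiset.mem_map_of_mem lam (Finset.mem_univ i)
    rw [hms, Multiset.mem_bind] at hi
    obtain ⟨k, -, hk⟩ := hi
    exact ⟨k, Multiset.eq_of_mem_replicate hk⟩
  have hchain : ∀ i j, i ≤ j → lam i ∣ lam j := by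
    intro i j hij
    have hle := hmono hij
    obtain ⟨k, hk⟩ := hval i
    obtain ⟨l, hl⟩ := hval j
    rw [hk, hl] at hle ⊢
    rcases le_total k l with h | h
    · exact dvd_of_le_of_dvd_succ b hdvd h
    · exact (hle.antisymm (Nat.le_of_dvd (hb k) (dvd_of_le_of_dvd_succ b hdvd h))).dvd
  intro I J hIJ q hq hmax
  refine exists_subset_sum_eq_of_dvd_chain lam hchain (lam q) J
    (fun j hj => hchain j q (hmax j (Finset.mem_union_right I hj))) ?_
  rw [← hIJ]
  exact Finset.single_le_sum (fun _ _ => Nat.zero_le _) hq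
end

section
/- Let t ≥ 1, let a_1 > a_2 > … > a_t ≥ 2 be integers, let k_1,…,k_t ≥ 1 and m ≥ 0 be integers, and assume that a_i > Σ_{j=i+1}^{t} a_j·k_j for every i = 1,…,t. Then the nondecreasing sequence consisting of m copies of 1 together with k_i copies of a_i for each i = 1,…,t is sequential. -/
/-- The parts of a finite set can be cut down to sum to any value `v` lying between the sum
of the parts other than `1` and the whole sum. -/
theorem exists_subset_sum_eq {ι : Type*} (f : ι → ℕ) (J : Finset ι) (v : ℕ)
    (hlow : ∑ j ∈ J with f j ≠ 1, f j ≤ v) (hup : v ≤ ∑ j ∈ J, f j) :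
    ∃ J' ⊆ J, v = ∑ j ∈ J', f j := by
  classical
  have hsplit : ∑ j ∈ J with f j = 1, f j + ∑ j ∈ J with f j ≠ 1, f j = ∑ j ∈ J, f j :=
    Finset.sum_filter_add_sum_filter_not J (fun j => f j = 1) f
  have hones : ∀ s ⊆ J.filter (fun j => f j = 1), ∑ j ∈ s, f j = s.card := fun s hs => by
    rw [Finset.card_eq_sum_ones]
    exact Finset.sum_congr rfl fun j hj => (Finset.mem_filter.mp (hs hj)).2
  rw [hones _ subset_rfl] at hsplit
  obtain ⟨s, hs, hcard⟩ := Finset.exists_subset_card_eq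
    (s := J.filter (fun j => f j = 1)) (n := v - ∑ j ∈ J with f j ≠ 1, f j) (by omega)
  refine ⟨s ∪ J.filter (fun j => f j ≠ 1),
    Finset.union_subset (hs.trans (Finset.filter_subset _ _)) (Finset.filter_subset _ _), ?_⟩
  rw [Finset.sum_union ((Finset.disjoint_filter_filter_not J J _).mono_left hs), hones s hs, hcard,
    Nat.sub_add_cancel hlow]

/-- a nondecreasing sequence of `m` copies of `1` and `k_i` copies
of `a_i`, where `a_1 > … > a_t ≥ 2` and `a_i > Σ_{j>i} a_j k_j` for all `i`, is
sequential. -/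
theorem dominated_sequence_sequential (t : ℕ) (ht : 1 ≤ t) (a k : Fin t → ℕ)
    (ha2 : ∀ i, 2 ≤ a i) (hdec : ∀ i j : Fin t, i < j → a j < a i)
    (hk : ∀ i, 1 ≤ k i) (m : ℕ)
    (hdom : ∀ i : Fin t, (∑ j ∈ Finset.univ.filter (fun j => i < j), a j * k j) < a i)
    (N : ℕ) (lam : Fin N → ℕ) (hmono : Monotone lam)
    (hms : Multiset.map lam Finset.univ.val =
      Multiset.replicate m 1 +
        (Finset.univ.val : Multiset (Fin t)).bind
          (fun i => Multiset.replicate (k i) (a i))) :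
    IsSequentialSeq lam := by
  intro I J hIJ q hq hmax
  by_cases hmem : ∃ j ∈ J, lam j = lam q
  · obtain ⟨j, hj, hjq⟩ := hmem
    exact ⟨{j}, by simpa using hj, by simp [hjq]⟩
  push Not at hmem
  have hlt : ∀ j ∈ J, lam j < lam q := fun j hj =>
    lt_of_le_of_ne (hmono (hmax j (Finset.mem_union_right _ hj))) (hmem j hj)
  refine exists_subset_sum_eq lam J (lam q) ?_
    (hIJ ▸ Finset.single_le_sum (f := lam) (fun _ _ => Nat.zero_le _) hq)
  -- `g` keeps the parts different from `1` and smaller than `lam q`.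
  set g : ℕ → ℕ := fun x => if x ≠ 1 ∧ x < lam q then x else 0 with hg
  have hJ : ∑ j ∈ J with lam j ≠ 1, lam j ≤ ∑ p, g (lam p) := by
    refine le_trans (Finset.sum_le_sum fun j hj => ?_)
      (Finset.sum_le_sum_of_subset (Finset.subset_univ (J.filter fun j => lam j ≠ 1)))
    obtain ⟨hjJ, hj1⟩ := Finset.mem_filter.mp hj
    simp [hg, hj1, hlt j hjJ]
  have hsum : ∑ p, g (lam p) = ∑ j, k j * g (a j) := by
    have h := congrArg (fun s => (Multiset.map g s).sum) hms
    simpa [Multiset.map_bind, Multiset.sum_bind, hg, Function.comp_def, List.sum_ofFn] using h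
  refine hJ.trans (hsum.trans_le ?_)
  have hqmem : lam q ∈ Multiset.map lam Finset.univ.val :=
    Multiset.mem_map_of_mem _ (Finset.mem_univ q)
  rw [hms, Multiset.mem_add, Multiset.mem_bind] at hqmem
  rcases hqmem with h | ⟨i, -, h⟩
  · have h1 := Multiset.eq_of_mem_replicate h
    refine (Finset.sum_eq_zero fun j _ => ?_).trans_le (Nat.zero_le _)
    have := ha2 j
    simp only [hg, h1]
    rw [if_neg (by omega), mul_zero]
  · have hi := Multiset.eq_of_mem_replicate h
    refine le_trans ?_ (hi ▸ (hdom i).le)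
    rw [Finset.sum_filter]
    refine Finset.sum_le_sum fun j _ => ?_
    have hanti : StrictAnti a := fun i j hij => hdec i j hij
    simp only [hg, hi, hanti.lt_iff_gt]
    split_ifs with h1 h2 h2
    · exact (mul_comm _ _).le
    · exact absurd h1.2 h2
    · simp
    · simp
end

section
/- Let a, b, l, m, r be positive integers with b ≥ 2, a = b·l + r, m ≥ r, and l ≥ 2. Then the nondecreasing sequence (1^m, b^l, a), consisting of m copies of 1, l copies of b, and one copy of a, is strongly sequential. -/
/-- If the elements of `J` outside `S` all have weight one, every value between the weights of
`S` and `J` is the weight of some subset of `J`. -/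
theorem exists_subset_sum_eq_of_sdiff_eq_one {ι : Type*} [DecidableEq ι] (f : ι → ℕ)
    {S J : Finset ι} {t : ℕ} (hS : S ⊆ J) (hone : ∀ j ∈ J \ S, f j = 1)
    (hlo : ∑ j ∈ S, f j ≤ t) (hhi : t ≤ ∑ j ∈ J, f j) :
    ∃ J' ⊆ J, t = ∑ j ∈ J', f j := by
  have hcard : ∑ j ∈ J \ S, f j = (J \ S).card := by
    rw [Finset.sum_congr rfl hone, Finset.card_eq_sum_ones]
  have hsplit := Finset.sum_sdiff (f := f) hS
  obtain ⟨U, hU, hUc⟩ := Finset.exists_subset_card_eq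
    (s := J \ S) (n := t - ∑ j ∈ S, f j) (by omega)
  have hdisj : Disjoint S U :=
    Finset.disjoint_of_subset_right hU Finset.disjoint_sdiff
  refine ⟨S ∪ U, Finset.union_subset hS (hU.trans Finset.sdiff_subset), ?_⟩
  rw [Finset.sum_union hdisj, Finset.sum_congr rfl fun j hj => hone j (hU hj),
    ← Finset.card_eq_sum_ones, hUc]
  omega

/-- In a set of indices bounded above by `h`, the `i`-th element from the top is less than
`h - i`. -/
theorem sort_getElem_add_lt {n : ℕ} (B : Finset (Fin n)) {h : ℕ} (hB : ∀ x ∈ B, (x : ℕ) < h)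
    (i : ℕ) (hi : i < B.card) :
    ((B.sort (· ≤ ·))[B.card - 1 - i]'(by rw [Finset.length_sort]; omega) : ℕ) + i < h := by
  induction i with
  | zero => exact hB _ ((Finset.mem_sort (· ≤ ·)).1 (List.getElem_mem _))
  | succ i ih =>
    have hlt := B.sortedLT_sort.strictMono_get
      (a := ⟨B.card - 1 - (i + 1), by rw [Finset.length_sort]; omega⟩)
      (b := ⟨B.card - 1 - i, by rw [Finset.length_sort]; omega⟩)
      (Fin.mk_lt_mk.2 (by omega))
    have := ih (by omega)
    simp only [List.get_eq_getElem, Fin.lt_def] at hlt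
    omega

/-- In a set of indices bounded below by `h`, the `i`-th element from the bottom is at least
`h + i`. -/
theorem le_sort_getElem {n : ℕ} (B : Finset (Fin n)) {h : ℕ} (hB : ∀ x ∈ B, h ≤ (x : ℕ))
    (i : ℕ) (hi : i < B.card) :
    h + i ≤ ((B.sort (· ≤ ·))[i]'(by rw [Finset.length_sort]; omega) : ℕ) := by
  induction i with
  | zero => exact hB _ ((Finset.mem_sort (· ≤ ·)).1 (List.getElem_mem _))
  | succ i ih =>
    have hlt := B.sortedLT_sort.strictMono_get
      (a := ⟨i, by rw [Finset.length_sort]; omega⟩)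
      (b := ⟨i + 1, by rw [Finset.length_sort]; omega⟩)
      (Fin.mk_lt_mk.2 (by omega))
    have := ih (by omega)
    simp only [List.get_eq_getElem, Fin.lt_def] at hlt
    omega

/-- If the sorted lists agree from the top along all of `A`, then `A ⊆ B`. -/
theorem subset_of_sort_getElem?_eq {n : ℕ} {A B : Finset (Fin n)}
    (h : ∀ i < A.card,
      (A.sort (· ≤ ·))[A.card - 1 - i]? = (B.sort (· ≤ ·))[B.card - 1 - i]?) :
    A ⊆ B := by
  intro x hx
  obtain ⟨j, hj, rfl⟩ := List.getElem_of_mem ((Finset.mem_sort (· ≤ ·)).2 hx)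
  have hj' : j < A.card := by rwa [Finset.length_sort] at hj
  have hx' := h (A.card - 1 - j) (by omega)
  rw [show A.card - 1 - (A.card - 1 - j) = j by omega, List.getElem?_eq_getElem hj] at hx'
  exact (Finset.mem_sort (· ≤ ·)).1 (List.mem_of_getElem? hx'.symm)

/-- An interval ending at `hi` is lexicographically larger than every set of indices below `hi`
which does not strictly contain it. -/
theorem lexLarger_Ico {n : ℕ} (lo hi : Fin n) (B : Finset (Fin n)) (hB : ∀ x ∈ B, x < hi)
    (hss : ¬ Finset.Ico lo hi ⊂ B) : LexLarger (Finset.Ico lo hi) B := by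
  classical
  have hcA : (Finset.Ico lo hi).card = hi - lo := Fin.card_Ico lo hi
  have hlo : ∀ x ∈ Finset.Ico lo hi, (lo : ℕ) ≤ x := fun x hx => (Finset.mem_Ico.1 hx).1
  generalize Finset.Ico lo hi = A at *
  by_cases hagree : ∀ i < min A.card B.card,
      (A.sort (· ≤ ·))[A.card - 1 - i]? = (B.sort (· ≤ ·))[B.card - 1 - i]?
  · left
    rcases le_or_gt B.card A.card with hle | hlt
    · exact subset_of_sort_getElem?_eq fun i hi => (hagree i (by omega)).symm
    · have hAB : A ⊆ B := subset_of_sort_getElem?_eq fun i hi => hagree i (by omega)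
      exact absurd (hAB.ssubset_of_ne (by rintro rfl; omega)) hss
  · right
    push Not at hagree
    obtain ⟨hq, hne⟩ := Nat.find_spec hagree
    have hmin := fun i hi => Nat.find_min hagree (m := i) hi
    generalize Nat.find hagree = q at *
    have hqA : A.card - 1 - q < (A.sort (· ≤ ·)).length := by
      rw [Finset.length_sort]; omega
    have hqB : B.card - 1 - q < (B.sort (· ≤ ·)).length := by
      rw [Finset.length_sort]; omega
    refine ⟨q, hq, fun i hi => ?_, _, _, List.getElem?_eq_getElem hqA,
      List.getElem?_eq_getElem hqB, ?_⟩
    · by_contra hcon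
      exact hmin i hi ⟨by omega, hcon⟩
    · rw [List.getElem?_eq_getElem hqA, List.getElem?_eq_getElem hqB] at hne
      have h1 := le_sort_getElem A hlo (A.card - 1 - q) (by omega)
      have h2 := sort_getElem_add_lt B (h := hi) hB q (by omega)
      refine lt_of_le_of_ne (Fin.le_def.2 (by omega)) fun h => hne (by rw [h])

/-- the nondecreasing sequence `(1^m, b^l, a)` with `b ≥ 2`,
`a = b·l + r`, `m ≥ r ≥ 1` and `l ≥ 2` is strongly sequential. -/
theorem abl_strongly_sequential (a b l m r : ℕ)
    (hb : 2 ≤ b) (hr : 1 ≤ r) (ha : a = b * l + r) (hm : r ≤ m) (hl : 2 ≤ l) :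
    StronglySequential (fun i : Fin (m + l + 1) =>
      if (i : ℕ) < m then 1 else if (i : ℕ) < m + l then b else a) := by
  set lam : Fin (m + l + 1) → ℕ := fun i =>
    if (i : ℕ) < m then 1 else if (i : ℕ) < m + l then b else a with hlam
  have lam_one : ∀ i : Fin (m + l + 1), (i : ℕ) < m → lam i = 1 := fun i hi => by
    simp [hlam, hi]
  have lam_b : ∀ i : Fin (m + l + 1), m ≤ (i : ℕ) → (i : ℕ) < m + l → lam i = b :=
    fun i h1 h2 => by simp [hlam, h2, not_lt.2 h1]
  have lam_last : lam (Fin.last (m + l)) = a := by simp [hlam]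
  have lam_pos : ∀ i, 0 < lam i := fun i => by
    simp only [hlam]; split_ifs <;> omega
  let mid : Fin (m + l + 1) := ⟨m, by omega⟩
  have sum_mid : ∑ i ∈ Finset.Ico mid (Fin.last (m + l)), lam i = b * l := by
    rw [Finset.sum_congr rfl fun i hi =>
      lam_b i (Finset.mem_Ico.1 hi).1 (Finset.mem_Ico.1 hi).2]
    simp [mid, mul_comm]
  refine ⟨fun I J hIJ q hq hmax => ?_, Or.inr ?_⟩
  · by_cases hp : ∃ p ∈ J, lam p = lam q
    · obtain ⟨p, hpJ, hpq⟩ := hp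
      exact ⟨{p}, by simpa using hpJ, by simp [hpq]⟩
    push Not at hp
    have hle : lam q ≤ ∑ j ∈ J, lam j :=
      hIJ ▸ Finset.single_le_sum (f := lam) (fun _ _ => Nat.zero_le _) hq
    refine exists_subset_sum_eq_of_sdiff_eq_one lam (S := J.filter fun j => m ≤ (j : ℕ))
      (Finset.filter_subset _ _) (fun j hj => lam_one j ?_) ?_ hle
    · simp only [Finset.mem_sdiff, Finset.mem_filter, not_and, not_le] at hj
      exact hj.2 hj.1
    · rcases lt_or_ge (q : ℕ) (m + l) with hql | hql
      · rw [Finset.filter_eq_empty_iff.2]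
        · simp
        · intro j hj hmj
          have hjq : (j : ℕ) ≤ q := hmax j (Finset.mem_union_right _ hj)
          exact hp j hj (by rw [lam_b j hmj (by omega), lam_b q (by omega) hql])
      · obtain rfl : q = Fin.last (m + l) := Fin.ext (by simp; omega)
        rw [lam_last, ha]
        refine le_trans (Finset.sum_le_sum_of_subset (t := Finset.Ico mid (Fin.last (m + l))) ?_)
          (sum_mid.le.trans (Nat.le_add_right _ _))
        intro j hj
        rw [Finset.mem_filter] at hj
        refine Finset.mem_Ico.2 ⟨hj.2, lt_of_le_of_ne (Fin.le_last j) ?_⟩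
        rintro rfl
        exact hp _ hj.1 rfl
  · let lo : Fin (m + l + 1) := ⟨m - r, by omega⟩
    have hlomid : lo ≤ mid := Fin.mk_le_mk.2 (by omega)
    have hmidlast : mid ≤ Fin.last (m + l) := Fin.le_last _
    have sum_lo : ∑ i ∈ Finset.Ico lo mid, lam i = r := by
      rw [Finset.sum_congr rfl fun i hi => lam_one i (Finset.mem_Ico.1 hi).2]
      simp [lo, mid]
      omega
    have hsum : ∑ i ∈ Finset.Ico lo (Fin.last (m + l)), lam i = a := by
      rw [← Finset.Ico_union_Ico_eq_Ico hlomid hmidlast,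
        Finset.sum_union (Finset.Ico_disjoint_Ico_consecutive _ _ _), sum_lo, sum_mid, ha,
        add_comm]
    refine ⟨Finset.Ico lo (Fin.last (m + l)), ⟨⟨?_, by rw [hsum, lam_last]⟩, ?_⟩,
      ⟨m + l - 1, by omega⟩, ?_, ?_, {⟨m + l - 2, by omega⟩}, ?_, ?_⟩
    · simp [lo]
      omega
    · rintro J ⟨hcard, hJ⟩
      refine lexLarger_Ico _ _ _ (fun x hx => lt_of_le_of_ne (Fin.le_last x) ?_) fun hss => ?_
      · rintro rfl
        obtain ⟨y, hy, hne⟩ := Finset.exists_mem_ne (s := J) (by omega) (Fin.last (m + l))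
        have := Finset.add_le_sum (f := lam) (fun _ _ => Nat.zero_le _) hx hy hne.symm
        have := lam_pos y
        omega
      · obtain ⟨x, hxJ, hx⟩ := Finset.exists_of_ssubset hss
        have := Finset.sum_lt_sum_of_subset hss.1 hxJ hx (lam_pos x) fun _ _ _ => Nat.zero_le _
        omega
    · simp [lo, Fin.le_def, Fin.lt_def]
      omega
    · intro p hp
      have := Fin.lt_def.1 (Finset.mem_Ico.1 hp).2
      simp [Fin.le_def] at this ⊢
      omega
    · simp [lo, Fin.le_def, Fin.lt_def]
      omega
    · rw [Finset.sum_singleton, lam_b _ (by simp; omega) (by simp; omega),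
        lam_b _ (by simp; omega) (by simp; omega)]
end

section
/- Let b, d, m be positive integers and let x, y ≥ 0 and ε_1, ε_2 ∈ {0,1} be integers such that m = b·x + ε_1 and m − d = (b+d)·y + ε_2. Then 2x + ε_1 > 2y + ε_2. -/
/-- if `m = b·x + ε₁` and `m − d = (b+d)·y + ε₂` with `b, d, m` positive,
`x, y ≥ 0` and `ε₁, ε₂ ∈ {0,1}`, then `2x + ε₁ > 2y + ε₂`. -/
theorem two_x_gt_two_y (b d m x y ε₁ ε₂ : ℤ)
    (hb : 0 < b) (hd : 0 < d) (hm : 0 < m) (hx : 0 ≤ x) (hy : 0 ≤ y)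
    (hε₁ : ε₁ = 0 ∨ ε₁ = 1) (hε₂ : ε₂ = 0 ∨ ε₂ = 1)
    (h1 : m = b * x + ε₁) (h2 : m - d = (b + d) * y + ε₂) :
    2 * y + ε₂ < 2 * x + ε₁ := by
  have hdy : 1 ≤ d * (y + 1) := Int.mul_pos hd (by lia)
  have hxy : b * (x - y) = d * (y + 1) + ε₂ - ε₁ := by linear_combination h2 - h1
  have hyx : 0 ≤ x - y := nonneg_of_mul_nonneg_right (by lia : 0 ≤ b * (x - y)) hb
  rcases hyx.eq_or_lt with h | h
  · rw [← h, mul_zero] at hxy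
    lia
  · lia
end

section
/- Let n ≥ 1, set a_i = 3^{i−1} for i = 1,…,n, and let N be an integer with N > 2·Σ_{i=1}^{n} a_i. Define λ = (a_1,…,a_n, N+a_1,…,N+a_n) ∈ ℤ^{2n}. Then the cut associated to λ, namely S_λ = {(x_1,…,x_n,y_1,…,y_n) ∈ {-1,0,1}^{2n} : Σ_{i=1}^{n} a_i·x_i + Σ_{i=1}^{n} (N+a_i)·y_i = 0}, is equal to the set {(x_1,…,x_n,y_1,…,y_n) ∈ {-1,0,1}^{2n} : Σ_{i=1}^{n} y_i = 0 and x_i + y_i = 0 for every i = 1,…,n}. -/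
/-- Ternary digits in `{-2, …, 2}` representing zero all vanish. -/
theorem eq_zero_of_sum_three_pow_mul_eq_zero (n : ℕ) (z : ℕ → ℤ) (hz : ∀ i < n, |z i| ≤ 2)
    (h : ∑ i ∈ Finset.range n, 3 ^ i * z i = 0) : ∀ i < n, z i = 0 := by
  induction n generalizing z with
  | zero => intro i hi; omega
  | succ n ih =>
    have hshift : ∑ i ∈ Finset.range n, 3 ^ (i + 1) * z (i + 1)
        = 3 * ∑ i ∈ Finset.range n, 3 ^ i * z (i + 1) := by
      rw [Finset.mul_sum]
      exact Finset.sum_congr rfl fun i _ => by ring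
    rw [Finset.sum_range_succ', hshift, pow_zero, one_mul] at h
    have hz0 := abs_le.mp (hz 0 n.succ_pos)
    have htail := ih (fun i => z (i + 1)) (fun i hi => hz (i + 1) (by omega)) (by omega)
    rintro (_ | i) hi
    · omega
    · exact htail i (by omega)

/-- If `N` exceeds `2 * ∑ 3 ^ i`, then `N` times an integer plus a sum of ternary digits in
`{-2, …, 2}` vanishes only if the integer and all the digits do. -/
theorem mul_add_sum_three_pow_mul_eq_zero_iff (n : ℕ) (N s : ℤ) (z : ℕ → ℤ)
    (hN : 2 * ∑ i ∈ Finset.range n, (3 : ℤ) ^ i < N) (hz : ∀ i < n, |z i| ≤ 2) :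
    N * s + ∑ i ∈ Finset.range n, 3 ^ i * z i = 0 ↔ s = 0 ∧ ∀ i < n, z i = 0 := by
  constructor
  · intro h
    have hbound : |∑ i ∈ Finset.range n, 3 ^ i * z i| < N := by
      refine lt_of_le_of_lt ((Finset.abs_sum_le_sum_abs _ _).trans ?_) hN
      rw [Finset.mul_sum]
      refine Finset.sum_le_sum fun i hi => ?_
      rw [abs_mul, abs_of_pos (by positivity : (0 : ℤ) < 3 ^ i), mul_comm]
      exact mul_le_mul_of_nonneg_right (hz i (Finset.mem_range.mp hi)) (by positivity)
    have hsum : ∑ i ∈ Finset.range n, 3 ^ i * z i = 0 :=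
      Int.eq_zero_of_abs_lt_dvd ⟨-s, by linarith⟩ hbound
    have hNpos : 0 < N := lt_of_le_of_lt (abs_nonneg _) hbound
    rw [hsum, add_zero] at h
    exact ⟨(mul_eq_zero.mp h).resolve_left hNpos.ne',
      eq_zero_of_sum_three_pow_mul_eq_zero n z hz hsum⟩
  · rintro ⟨rfl, h⟩
    rw [mul_zero, zero_add]
    exact Finset.sum_eq_zero fun i hi => by rw [h i (Finset.mem_range.mp hi), mul_zero]

/-- Vectors of the cube have integer coordinates of absolute value at most one. -/
theorem IsCube.exists_int {m : ℕ} {v : Fin m → ℝ} (hv : IsCube v) :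
    ∃ w : ℕ → ℤ, (∀ k, |w k| ≤ 1) ∧ ∀ i : Fin m, v i = w i := by
  have hint : ∀ i, ∃ a : ℤ, |a| ≤ 1 ∧ v i = a := by
    intro i
    rcases hv i with h | h | h
    · exact ⟨-1, by norm_num, by simp [h]⟩
    · exact ⟨0, by norm_num, by simp [h]⟩
    · exact ⟨1, by norm_num, by simp [h]⟩
  choose a ha hva using hint
  refine ⟨fun k => if h : k < m then a ⟨k, h⟩ else 0, fun k => ?_, fun i => by simp [hva]⟩
  by_cases h : k < m <;> simp [h, ha]

/-- A sum over `Fin (2 * n)` splits into its lower and upper halves. -/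
theorem sum_fin_two_mul (n : ℕ) (f : ℕ → ℝ) :
    ∑ i : Fin (2 * n), f i
      = ∑ i ∈ Finset.range n, f i + ∑ i ∈ Finset.range n, f (n + i) := by
  rw [Fin.sum_univ_eq_sum_range f, two_mul, Finset.sum_range_add]

/-- for `a_i = 3^{i-1}` and `N > 2·Σ a_i`, the cut associated to
`λ = (a_1,…,a_n, N+a_1,…,N+a_n)` consists exactly of the cube vectors
`(x,y)` with `Σ y_i = 0` and `x_i + y_i = 0` for all `i`. -/
theorem cut_of_lambda_n (n : ℕ) (hn : 1 ≤ n) (N : ℤ)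
    (hN : 2 * ∑ i ∈ Finset.range n, (3 : ℤ) ^ i < N) :
    {v : Fin (2 * n) → ℝ | IsCube v ∧
        ∑ i : Fin (2 * n),
          (if (i : ℕ) < n then ((3 : ℝ) ^ (i : ℕ)) else ((N : ℝ) + 3 ^ ((i : ℕ) - n)))
            * v i = 0} =
      {v : Fin (2 * n) → ℝ | IsCube v ∧
        (∑ i : Fin (2 * n), if n ≤ (i : ℕ) then v i else 0) = 0 ∧
        ∀ i : Fin (2 * n), ∀ _ : (i : ℕ) < n,
          v i + v ⟨(i : ℕ) + n, by have := i.isLt; omega⟩ = 0} := by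
  ext v
  simp only [Set.mem_ofPred_eq]
  refine and_congr_right fun hv => ?_
  obtain ⟨w, hw, hvw⟩ := hv.exists_int
  have hlambda : ∑ i : Fin (2 * n),
      (if (i : ℕ) < n then ((3 : ℝ) ^ (i : ℕ)) else ((N : ℝ) + 3 ^ ((i : ℕ) - n))) * v i
      = ((N * ∑ i ∈ Finset.range n, w (n + i)
          + ∑ i ∈ Finset.range n, 3 ^ i * (w i + w (n + i)) : ℤ) : ℝ) := by
    simp only [hvw]
    rw [sum_fin_two_mul n fun k =>
      (if k < n then ((3 : ℝ) ^ k) else ((N : ℝ) + 3 ^ (k - n))) * w k]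
    push_cast
    rw [Finset.mul_sum, ← Finset.sum_add_distrib, ← Finset.sum_add_distrib]
    refine Finset.sum_congr rfl fun i hi => ?_
    rw [if_pos (Finset.mem_range.mp hi), if_neg (by omega), Nat.add_sub_cancel_left]
    ring
  have hupper : (∑ i : Fin (2 * n), if n ≤ (i : ℕ) then v i else 0)
      = ((∑ i ∈ Finset.range n, w (n + i) : ℤ) : ℝ) := by
    simp only [hvw]
    rw [sum_fin_two_mul n fun k => if n ≤ k then (w k : ℝ) else 0,
      Finset.sum_eq_zero fun i hi => if_neg (by have := Finset.mem_range.mp hi; omega)]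
    simp
  rw [hlambda, hupper, Int.cast_eq_zero, Int.cast_eq_zero,
    mul_add_sum_three_pow_mul_eq_zero_iff n N _ (fun i => w i + w (n + i)) hN
      fun i _ => (abs_add_le _ _).trans (add_le_add (hw i) (hw (n + i)))]
  refine and_congr_right fun _ => ⟨fun h i hi => ?_, fun h i hi => ?_⟩
  · have hi' := h i hi
    rw [add_comm n] at hi'
    rw [hvw, hvw]
    exact_mod_cast hi'
  · have hi' := h ⟨i, by omega⟩ hi
    rw [hvw, hvw] at hi'
    rw [add_comm n]
    exact_mod_cast hi'
end
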